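/- Let G be drawn from a distribution in NSSBM(n,p,p̄,q) satisfying the gap condition n(p−q) ≥ C₀·(√(n·p̄·log n) + log n) for a sufficiently large universal constant C₀, with α := p̄/(p−q) constant. Then for δ ≥ 10·n^{−2} and n sufficiently large, with probability at least 1 − δ, the unit second eigenvector u2 of the unnormalized Laplacian satisfies ‖u2‖_∞ ≤ C(α,δ)/√n for a constant C(α,δ) depending only on α and δ. -/

import Mathlib

open Matrix MeasureTheory
open scoped BigOperators ENNReal Classical

noncomputable section

instance measSG {n : ℕ} : MeasurableSpace (SimpleGraph (Fin n)) := ⊤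

variable {n : ℕ}

/-- Adjacency matrix of a graph, over `ℝ`. -/
def adjM (G : SimpleGraph (Fin n)) : Matrix (Fin n) (Fin n) ℝ :=
  Matrix.of fun v w => if G.Adj v w then 1 else 0

/-- Laplacian of a weighted adjacency matrix. -/
def wlap (W : Matrix (Fin n) (Fin n) ℝ) : Matrix (Fin n) (Fin n) ℝ :=
  Matrix.diagonal (fun v => ∑ w, W v w) - W

/-- Unnormalized Laplacian of a graph. -/
def lap (G : SimpleGraph (Fin n)) : Matrix (Fin n) (Fin n) ℝ := wlap (adjM G)

/-- `eig M k` is the `(k+1)`-st smallest eigenvalue (root of the characteristic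
polynomial, with multiplicity) of `M`; e.g. `eig M 1 = λ₂`. -/
def eig (M : Matrix (Fin n) (Fin n) ℝ) (k : ℕ) : ℝ :=
  (M.charpoly.roots.sort (· ≤ ·)).getD k 0

def IsUnitEigenvector (M : Matrix (Fin n) (Fin n) ℝ) (t : ℝ) (u : Fin n → ℝ) : Prop :=
  M.mulVec u = t • u ∧ ∑ v, (u v) ^ 2 = 1

/-- Membership in the first community `P₁ = {1, …, n/2}`. -/
def inP1 (n : ℕ) (v : Fin n) : Prop := (v : ℕ) < n / 2

/-- `v` and `w` are in the same community. -/
def sameSide (n : ℕ) (v w : Fin n) : Prop := inP1 n v ↔ inP1 n w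

/-- Number of neighbours of `v` in its own community. -/
def din (G : SimpleGraph (Fin n)) (v : Fin n) : ℕ :=
  Nat.card {w : Fin n // G.Adj v w ∧ sameSide n v w}

/-- Number of neighbours of `v` in the other community. -/
def dout (G : SimpleGraph (Fin n)) (v : Fin n) : ℕ :=
  Nat.card {w : Fin n // G.Adj v w ∧ ¬ sameSide n v w}

/-- Degree of `v`. -/
def deg (G : SimpleGraph (Fin n)) (v : Fin n) : ℕ :=
  Nat.card {w : Fin n // G.Adj v w}

/-- `μ` samples each pair `(v,w)`, `v < w`, as an edge independently with probability `P v w`. -/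
def IsEdgeProduct (P : Fin n → Fin n → ℝ) (μ : PMF (SimpleGraph (Fin n))) : Prop :=
  ∀ G : SimpleGraph (Fin n),
    μ G = ∏ e ∈ Finset.univ.filter (fun e : Fin n × Fin n => e.1 < e.2),
      (if G.Adj e.1 e.2 then ENNReal.ofReal (P e.1 e.2) else ENNReal.ofReal (1 - P e.1 e.2))

/-- The edge-probability matrix of a member of the `NSSBM(n,p,p̄,q)` family. -/
def NSSBMprob (n : ℕ) (p pbar q : ℝ) (P : Fin n → Fin n → ℝ) : Prop :=
  (∀ v w, P v w = P w v) ∧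
  (∀ v w : Fin n, v ≠ w → sameSide n v w → p ≤ P v w ∧ P v w ≤ pbar) ∧
  (∀ v w : Fin n, ¬ sameSide n v w → P v w = q)

/-- The ideal second eigenvector `u₂⋆`. -/
def u2star (n : ℕ) : Fin n → ℝ :=
  fun v => if inP1 n v then 1 / Real.sqrt n else -(1 / Real.sqrt n)

/-- Spectral bisection with matrix `M` recovers the planted partition of `G`. -/
def BisectCorrect (n : ℕ) (M : Matrix (Fin n) (Fin n) ℝ) : Prop :=
  ∀ u : Fin n → ℝ, IsUnitEigenvector M (eig M 1) u →
    ({v : Fin n | u v < 0} = {v : Fin n | inP1 n v} ∨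
     {v : Fin n | u v < 0} = {v : Fin n | ¬ inP1 n v})

/-- Off-diagonal part of the probability matrix: the expected adjacency matrix. -/
def offP (P : Fin n → Fin n → ℝ) : Matrix (Fin n) (Fin n) ℝ :=
  Matrix.of fun v w => if v = w then 0 else P v w

/-- Expected unnormalized Laplacian. -/
def expLap (P : Fin n → Fin n → ℝ) : Matrix (Fin n) (Fin n) ℝ := wlap (offP P)

/-- Euclidean norm. -/
def l2 (x : Fin n → ℝ) : ℝ := Real.sqrt (∑ v, (x v) ^ 2)

/-- Inner product. -/
def dotp (x y : Fin n → ℝ) : ℝ := ∑ v, x v * y v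

/-- Entrywise max (ℓ∞) norm. -/
def linf (x : Fin n → ℝ) : ℝ := ⨆ v, |x v|

/-- ℓ2 → ℓ2 operator norm of a matrix. -/
def opNorm (M : Matrix (Fin n) (Fin n) ℝ) : ℝ :=
  ‖LinearMap.toContinuousLinearMap (Matrix.toEuclideanLin M)‖

/-- The crossing edges of `μ` are independent `Bernoulli(q)`, while the internal
edges are arbitrary (possibly depending on the crossing edges). -/
def CrossingProduct (n : ℕ) (q : ℝ) (μ : PMF (SimpleGraph (Fin n))) : Prop :=
  ∃ (ν : PMF (SimpleGraph (Fin n))) (κ : SimpleGraph (Fin n) → PMF (SimpleGraph (Fin n))),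
    IsEdgeProduct (fun v w => if sameSide n v w then 0 else q) ν ∧
    (∀ H, ∀ G ∈ (κ H).support, ∀ v w, ¬ sameSide n v w → ((G.Adj v w) ↔ H.Adj v w)) ∧
    μ = ν.bind κ

/-!
Let `τ` be a small multiple of `(p - q) / p̄` and `d = n p̄`. With high probability the adjacency
form of `G` exceeds that of its expectation by at most `τ d` on every unit vector. This one-sided
comparison is obtained in three steps: a union bound over a grid of vectors with entries
`O(1 / √n)`, truncation of the larger entries, and the sparsity of small vertex sets, which through
a layer-cake formula controls the edges joining two large entries. Together with the concentration
of the degrees and of the cut between the two communities, it shows that the second eigenvalue of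
the Laplacian is near `n q`, while on the vectors orthogonal to both `1` and the `±1` indicator of
the communities the Laplacian form is at least about `n (p + q) / 2`.

Now let `v` be a vertex at which `|u₂|` is maximal, and delete the edges at `v`. By the Davis–Kahan
argument, `u₂` is close, up to a small multiple of `‖u₂‖_∞`, to a multiple of the eigenvector `φ` of
the remaining graph, plus a constant of size `O(1 / √n)`. Since `φ` is independent of the edges at
`v`, the sum of `u₂` over the neighbours of `v` is `O(d / √n)` plus a small multiple of
`d ‖u₂‖_∞`. But by the eigenvector equation this sum is `(deg v - λ₂) u₂(v)`, and `deg v - λ₂` is of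
order `d`, hence `‖u₂‖_∞ = O(1 / √n)`.
-/

section Bernoulli

/-- Probability that a Bernoulli variable with parameter `p` takes the value `b`. -/
def bernoulliMass (p : ℝ) (b : Bool) : ℝ := if b then p else 1 - p

/-- The exponent `s x - p (eˣ - 1)`: the logarithmic moment generating function of `s x` for a
Bernoulli variable `s` of mean `p` is at most that of a Poisson variable, `p (eˣ - 1)`. -/
def poissonDeviation (p x s : ℝ) : ℝ := s * x - p * (Real.exp x - 1)

lemma bernoulliMass_nonneg {p : ℝ} (hp : p ∈ Set.Icc 0 1) (b : Bool) : 0 ≤ bernoulliMass p b := by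
  cases b <;> simp [bernoulliMass, hp.1, hp.2]

lemma sum_bernoulliMass (p : ℝ) : ∑ b, bernoulliMass p b = 1 := by simp [bernoulliMass]

lemma sum_bernoulliMass_mul_exp_le_one (p x : ℝ) :
    ∑ b : Bool, bernoulliMass p b * Real.exp (poissonDeviation p x (if b then 1 else 0)) ≤ 1 := by
  set t := p * (Real.exp x - 1)
  calc ∑ b : Bool, bernoulliMass p b * Real.exp (poissonDeviation p x (if b then 1 else 0))
      = (t + 1) * Real.exp (-t) := by
        simp only [Fintype.sum_bool, bernoulliMass, poissonDeviation, Bool.false_eq_true, if_true,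
          if_false, one_mul, zero_mul, zero_sub, sub_eq_add_neg x, Real.exp_add]
        ring
    _ ≤ Real.exp t * Real.exp (-t) := by gcongr; exact Real.add_one_le_exp t
    _ = 1 := by rw [← Real.exp_add, add_neg_cancel, Real.exp_zero]

variable {κ : Type*} [Fintype κ] [DecidableEq κ]

lemma sum_prod_eq_prod_sum_bool (f : κ → Bool → ℝ) :
    ∑ b : κ → Bool, ∏ i, f i (b i) = ∏ i, ∑ b, f i b := by
  simpa only [Fintype.piFinset_univ] using
    (Finset.prod_univ_sum (fun _ : κ => (Finset.univ : Finset Bool)) f).symm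

lemma sum_prod_bernoulliMass_mul_exp_le_one {p : κ → ℝ} (hp : ∀ i, p i ∈ Set.Icc 0 1)
    (x : κ → ℝ) :
    ∑ b : κ → Bool, ∏ i, bernoulliMass (p i) (b i) *
      Real.exp (poissonDeviation (p i) (x i) (if b i then 1 else 0)) ≤ 1 := by
  rw [sum_prod_eq_prod_sum_bool fun i b => bernoulliMass (p i) b *
    Real.exp (poissonDeviation (p i) (x i) (if b then 1 else 0))]
  exact Finset.prod_le_one
    (fun i _ => Finset.sum_nonneg fun b _ =>
      mul_nonneg (bernoulliMass_nonneg (hp i) b) (Real.exp_pos _).le)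
    fun i _ => sum_bernoulliMass_mul_exp_le_one _ _

-- Conditionally on the coordinates outside `S` the weights are constants.
lemma sum_prod_bernoulliMass_mul_exp_sum_le_one {p : κ → ℝ} (hp : ∀ i, p i ∈ Set.Icc 0 1)
    (S : κ → Prop) (x : (κ → Bool) → κ → ℝ)
    (hx : ∀ b b' : κ → Bool, (∀ i, ¬ S i → b i = b' i) → ∀ i, S i → x b i = x b' i) :
    ∑ b : κ → Bool, (∏ i, bernoulliMass (p i) (b i)) *
      Real.exp (∑ i with S i, poissonDeviation (p i) (x b i) (if b i then 1 else 0)) ≤ 1 := by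
  let glue := (Equiv.piEquivPiSubtypeProd S fun _ => Bool).symm
  let x₀ (b₂ : {i // ¬ S i} → Bool) : κ → ℝ := x (glue (fun _ => false, b₂))
  have hsplit (b₁ : {i // S i} → Bool) (b₂ : {i // ¬ S i} → Bool) :
      (∏ i, bernoulliMass (p i) (glue (b₁, b₂) i)) * Real.exp (∑ i with S i,
        poissonDeviation (p i) (x (glue (b₁, b₂)) i) (if glue (b₁, b₂) i then 1 else 0)) =
      (∏ i : {i // S i}, bernoulliMass (p i) (b₁ i) *
        Real.exp (poissonDeviation (p i) (x₀ b₂ i) (if b₁ i then 1 else 0))) *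
      ∏ i : {i // ¬ S i}, bernoulliMass (p i) (b₂ i) := by
    rw [Real.exp_sum, Finset.prod_subtype (p := S) (Finset.univ.filter S) (by simp),
      ← Fintype.prod_subtype_mul_prod_subtype S, mul_right_comm, ← Finset.prod_mul_distrib]
    congr 1 <;> refine Finset.prod_congr rfl fun i _ => ?_
    · have hxi : x (glue (b₁, b₂)) i = x₀ b₂ i :=
        hx _ _ (fun j hj => by simp [glue, Equiv.piEquivPiSubtypeProd, hj]) i i.2
      rw [hxi]
      simp [glue, Equiv.piEquivPiSubtypeProd, i.2]
    · simp [glue, Equiv.piEquivPiSubtypeProd, i.2]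
  rw [← glue.sum_comp, Fintype.sum_prod_type_right]
  calc ∑ b₂, ∑ b₁, (∏ i, bernoulliMass (p i) (glue (b₁, b₂) i)) * Real.exp (∑ i with S i,
        poissonDeviation (p i) (x (glue (b₁, b₂)) i) (if glue (b₁, b₂) i then 1 else 0))
      ≤ ∑ b₂ : {i // ¬ S i} → Bool, ∏ i : {i // ¬ S i}, bernoulliMass (p i) (b₂ i) := by
        refine Finset.sum_le_sum fun b₂ _ => ?_
        rw [Finset.sum_congr rfl fun b₁ _ => hsplit b₁ b₂, ← Finset.sum_mul]
        exact mul_le_of_le_one_left (Finset.prod_nonneg fun i _ => bernoulliMass_nonneg (hp i) _)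
          (sum_prod_bernoulliMass_mul_exp_le_one (p := fun i : {i // S i} => p i) (fun i => hp i) _)
    _ = 1 := by
        rw [sum_prod_eq_prod_sum_bool fun i : {i // ¬ S i} => bernoulliMass (p i)]
        simp only [sum_bernoulliMass, Finset.prod_const_one]

end Bernoulli

section EdgeProduct

/-- Unordered pairs of distinct vertices, encoded as increasing pairs. -/
abbrev VPair (n : ℕ) := {e : Fin n × Fin n // e.1 < e.2}

/-- The bijection between graphs and their edge indicators. -/
def graphEquiv (n : ℕ) : SimpleGraph (Fin n) ≃ (VPair n → Bool) where
  toFun G e := decide (G.Adj e.1.1 e.1.2)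
  invFun b := SimpleGraph.fromRel fun i j => ∃ h : i < j, b ⟨(i, j), h⟩
  left_inv G := by
    ext i j
    simp only [decide_eq_true_eq, exists_prop, SimpleGraph.fromRel_adj, G.adj_comm j i,
      ← or_and_right, lt_or_lt_iff_ne]
    exact ⟨fun h => h.2.2, fun h => ⟨h.ne, h.ne, h⟩⟩
  right_inv b := by
    funext ⟨⟨i, j⟩, h⟩
    have hij : i < j := h
    simp [hij, hij.ne, hij.not_gt]

lemma graphEquiv_symm_adj (b : VPair n → Bool) (e : VPair n) :
    ((graphEquiv n).symm b).Adj e.1.1 e.1.2 ↔ b e = true := by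
  conv_rhs => rw [← (graphEquiv n).apply_symm_apply b]
  simp [graphEquiv]

lemma sum_vpair_eq_sum_ite (F : Fin n → Fin n → ℝ) :
    ∑ e : VPair n, F e.1.1 e.1.2 = ∑ i, ∑ j, if i < j then F i j else 0 := by
  rw [← Finset.sum_subtype (Finset.univ.filter fun e : Fin n × Fin n => e.1 < e.2)
    (p := fun e : Fin n × Fin n => e.1 < e.2) (by simp) (fun e => F e.1 e.2),
    Finset.sum_filter, Fintype.sum_prod_type]

lemma sum_sum_eq_two_mul_sum_vpair {F : Fin n → Fin n → ℝ} (hsymm : ∀ i j, F i j = F j i)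
    (hdiag : ∀ i, F i i = 0) : ∑ i, ∑ j, F i j = 2 * ∑ e : VPair n, F e.1.1 e.1.2 := by
  have hswap : ∑ i, ∑ j, (if i < j then F i j else 0) =
      ∑ i, ∑ j, if j < i then F i j else 0 := by
    rw [Finset.sum_comm]
    simp only [hsymm]
  rw [sum_vpair_eq_sum_ite, two_mul]
  nth_rewrite 2 [hswap]
  simp only [← Finset.sum_add_distrib]
  refine Finset.sum_congr rfl fun i _ => Finset.sum_congr rfl fun j _ => ?_
  rcases lt_trichotomy i j with h | rfl | h
  · simp [h, h.not_gt]
  · simp [hdiag]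
  · simp [h, h.not_gt]

lemma sum_sum_ite_incident {F : Fin n → Fin n → ℝ} (hsymm : ∀ i j, F i j = F j i)
    (hdiag : ∀ i, F i i = 0) (v : Fin n) :
    ∑ i, ∑ j, (if i = v ∨ j = v then F i j else 0) = 2 * ∑ w, F v w := by
  have hsplit (i j : Fin n) : (if i = v ∨ j = v then F i j else 0) =
      (if i = v then F v j else 0) + if j = v then F v i else 0 := by
    by_cases hi : i = v <;> by_cases hj : j = v <;> simp [hi, hj, hdiag, hsymm i v]
  simp only [hsplit, Finset.sum_add_distrib]
  rw [Finset.sum_comm]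
  simp [two_mul]

lemma sum_vpair_incident {F : Fin n → Fin n → ℝ} (hsymm : ∀ i j, F i j = F j i)
    (hdiag : ∀ i, F i i = 0) (v : Fin n) :
    ∑ e : VPair n with e.1.1 = v ∨ e.1.2 = v, F e.1.1 e.1.2 = ∑ w, F v w := by
  have h := sum_sum_eq_two_mul_sum_vpair (F := fun i j => if i = v ∨ j = v then F i j else 0)
    (fun i j => by simp only [hsymm i j, or_comm]) (fun i => by simp [hdiag])
  rw [sum_sum_ite_incident hsymm hdiag] at h
  rw [Finset.sum_filter]
  linarith

lemma adjM_comm (G : SimpleGraph (Fin n)) (i j : Fin n) : adjM G i j = adjM G j i := by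
  simp [adjM, G.adj_comm]

lemma adjM_self (G : SimpleGraph (Fin n)) (i : Fin n) : adjM G i i = 0 := by simp [adjM]

lemma adjM_nonneg (G : SimpleGraph (Fin n)) (i j : Fin n) : 0 ≤ adjM G i j := by
  simp only [adjM, of_apply]; split_ifs <;> simp

lemma adjM_le_one (G : SimpleGraph (Fin n)) (i j : Fin n) : adjM G i j ≤ 1 := by
  simp only [adjM, of_apply]; split_ifs <;> simp

/-- `P` is a symmetric matrix of edge probabilities; its diagonal, which no edge uses, is
arbitrary. -/
structure IsEdgeProb (P : Fin n → Fin n → ℝ) : Prop where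
  symm : ∀ i j, P i j = P j i
  mem_Icc : ∀ i j, i ≠ j → P i j ∈ Set.Icc 0 1

variable {P : Fin n → Fin n → ℝ} {μ : PMF (SimpleGraph (Fin n))}

lemma offP_self (P : Fin n → Fin n → ℝ) (i : Fin n) : offP P i i = 0 := by simp [offP]

lemma offP_comm (hP : ∀ i j, P i j = P j i) (i j : Fin n) : offP P i j = offP P j i := by
  simp only [offP, of_apply, hP i j, eq_comm]

lemma IsEdgeProb.offP_mem_Icc (hP : IsEdgeProb P) (i j : Fin n) : offP P i j ∈ Set.Icc 0 1 := by
  by_cases h : i = j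
  · simp [offP, h]
  · simpa [offP, h] using hP.mem_Icc i j h

lemma IsEdgeProb.offP_nonneg (hP : IsEdgeProb P) (i j : Fin n) : 0 ≤ offP P i j :=
  (hP.offP_mem_Icc i j).1

instance : MeasurableSingletonClass (SimpleGraph (Fin n)) :=
  ⟨fun _ => MeasurableSpace.measurableSet_top⟩

lemma IsEdgeProduct.toReal_apply (hμ : IsEdgeProduct P μ) (hP : IsEdgeProb P)
    (G : SimpleGraph (Fin n)) :
    (μ G).toReal = ∏ e : VPair n,
      bernoulliMass (offP P e.1.1 e.1.2) (decide (G.Adj e.1.1 e.1.2)) := by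
  rw [hμ G, ENNReal.toReal_prod, Finset.prod_subtype (p := fun e : Fin n × Fin n => e.1 < e.2) _
    (by simp)]
  refine Finset.prod_congr rfl fun e _ => ?_
  obtain ⟨h0, h1⟩ := hP.mem_Icc _ _ e.2.ne
  by_cases h : G.Adj e.1.1 e.1.2 <;> simp [h, bernoulliMass, offP, e.2.ne, h0, h1]

lemma IsEdgeProduct.integral_exp_poissonDeviation_le_one (hμ : IsEdgeProduct P μ)
    (hP : IsEdgeProb P) (S : VPair n → Prop) (a : SimpleGraph (Fin n) → VPair n → ℝ)
    (ha : ∀ G G' : SimpleGraph (Fin n),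
      (∀ e : VPair n, ¬ S e → (G.Adj e.1.1 e.1.2 ↔ G'.Adj e.1.1 e.1.2)) → a G = a G') :
    ∫ G, Real.exp (∑ e with S e,
      poissonDeviation (offP P e.1.1 e.1.2) (a G e) (adjM G e.1.1 e.1.2)) ∂μ.toMeasure ≤ 1 := by
  rw [PMF.integral_eq_sum, ← (graphEquiv n).symm.sum_comp]
  refine le_trans (le_of_eq ?_) (sum_prod_bernoulliMass_mul_exp_sum_le_one
    (p := fun e : VPair n => offP P e.1.1 e.1.2) (fun e => hP.offP_mem_Icc _ _) S
    (fun b => a ((graphEquiv n).symm b)) fun b b' hb i _ => ?_)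
  · simp only [hμ.toReal_apply hP, adjM, of_apply, graphEquiv_symm_adj, Bool.decide_eq_true,
      smul_eq_mul]
  · rw [ha _ ((graphEquiv n).symm b') fun e he => by
      rw [graphEquiv_symm_adj, graphEquiv_symm_adj, hb e he]]

lemma IsEdgeProduct.chernoff (hμ : IsEdgeProduct P μ) (hP : IsEdgeProb P) (S : VPair n → Prop)
    (a : SimpleGraph (Fin n) → VPair n → ℝ)
    (ha : ∀ G G' : SimpleGraph (Fin n),
      (∀ e : VPair n, ¬ S e → (G.Adj e.1.1 e.1.2 ↔ G'.Adj e.1.1 e.1.2)) → a G = a G') (c : ℝ) :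
    μ.toMeasure.real {G | c ≤ ∑ e with S e,
      poissonDeviation (offP P e.1.1 e.1.2) (a G e) (adjM G e.1.1 e.1.2)} ≤ Real.exp (-c) := by
  refine (ProbabilityTheory.measure_ge_le_exp_mul_mgf c zero_le_one .of_finite).trans ?_
  simp only [ProbabilityTheory.mgf, one_mul, neg_mul]
  exact mul_le_of_le_one_right (Real.exp_pos _).le
    (hμ.integral_exp_poissonDeviation_le_one hP S a ha)

lemma IsEdgeProduct.chernoff_const (hμ : IsEdgeProduct P μ) (hP : IsEdgeProb P)
    {a : Fin n → Fin n → ℝ} (ha : ∀ i j, a i j = a j i) (c : ℝ) :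
    μ.toMeasure.real {G | 2 * c ≤ ∑ i, ∑ j, poissonDeviation (offP P i j) (a i j) (adjM G i j)} ≤
      Real.exp (-c) := by
  refine le_trans (measureReal_mono fun G hG => ?_) (hμ.chernoff hP (fun _ => True)
    (fun _ e => a e.1.1 e.1.2) (fun _ _ _ => rfl) c)
  rw [Set.mem_ofPred_eq, sum_sum_eq_two_mul_sum_vpair
    (fun i j => by rw [offP_comm hP.symm, ha, adjM_comm])
    (fun i => by simp [poissonDeviation, offP_self, adjM_self])] at hG
  simp only [Set.mem_ofPred_eq, Finset.filter_true]
  linarith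

lemma IsEdgeProduct.chernoff_row (hμ : IsEdgeProduct P μ) (hP : IsEdgeProb P) (v : Fin n)
    (y : SimpleGraph (Fin n) → Fin n → ℝ) (c : ℝ) :
    μ.toMeasure.real {G | c ≤ ∑ w,
      poissonDeviation (offP P v w) (y (G.deleteIncidenceSet v) w) (adjM G v w)} ≤
      Real.exp (-c) := by
  let b (G : SimpleGraph (Fin n)) : Fin n → ℝ :=
    Function.update (y (G.deleteIncidenceSet v)) v 0
  refine le_trans (measureReal_mono fun G hG => ?_) (hμ.chernoff hP
    (fun e => e.1.1 = v ∨ e.1.2 = v) (fun G e => b G e.1.1 + b G e.1.2) (fun G G' h => ?_) c)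
  · refine le_of_le_of_eq (Set.mem_ofPred_eq ▸ hG) ?_
    have hrow := sum_vpair_incident
      (F := fun i j => poissonDeviation (offP P i j) (b G i + b G j) (adjM G i j))
      (fun i j => by rw [offP_comm hP.symm, add_comm, adjM_comm])
      (fun i => by simp [poissonDeviation, offP_self, adjM_self]) v
    refine Eq.trans (b := ∑ w, poissonDeviation (offP P v w) (b G v + b G w) (adjM G v w)) ?_
      (by convert hrow.symm)
    refine Finset.sum_congr rfl fun w _ => ?_
    by_cases hw : w = v
    · simp [hw, poissonDeviation, offP_self, adjM_self]
    · simp [b, hw]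
  · have hdel : G.deleteIncidenceSet v = G'.deleteIncidenceSet v := by
      ext i j
      simp only [SimpleGraph.deleteIncidenceSet_adj, and_congr_left_iff]
      rintro ⟨hi, hj⟩
      rcases lt_trichotomy i j with hij | rfl | hij
      · exact h ⟨(i, j), hij⟩ (by simp [hi, hj])
      · simp
      · simpa only [SimpleGraph.adj_comm] using h ⟨(j, i), hij⟩ (by simp [hi, hj])
    simp only [b, hdel]

end EdgeProduct

section Events

lemma measureReal_not_forall_le {Ω ι : Type*} [MeasurableSpace Ω] [Fintype ι] (ν : Measure Ω)
    (B : ι → Ω → Prop) :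
    ν.real {ω | ¬ ∀ i, B i ω} ≤ ∑ i, ν.real {ω | ¬ B i ω} := by
  have hunion : {ω | ¬ ∀ i, B i ω} = ⋃ i, {ω | ¬ B i ω} := by ext; simp
  exact hunion ▸ measureReal_iUnion_fintype_le _

lemma measureReal_not_forall_le_card_mul {Ω ι : Type*} [MeasurableSpace Ω] [Fintype ι]
    {ν : Measure Ω} {B : ι → Ω → Prop} {x : ℝ} (h : ∀ i, ν.real {ω | ¬ B i ω} ≤ x) :
    ν.real {ω | ¬ ∀ i, B i ω} ≤ Fintype.card ι * x :=
  (measureReal_not_forall_le ν B).trans <|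
    (Finset.sum_le_card_nsmul _ _ x fun i _ => h i).trans_eq (nsmul_eq_mul _ _)

lemma le_poissonDeviation {p x : ℝ} (hp : 0 ≤ p) (hx : |x| ≤ 1) (s : ℝ) :
    (s - p) * x - p * x ^ 2 ≤ poissonDeviation p x s := by
  have hexp : Real.exp x - 1 ≤ x + x ^ 2 := by
    linarith [(abs_le.1 (Real.abs_exp_sub_one_sub_id_le hx)).2]
  have := mul_le_mul_of_nonneg_left hexp hp
  rw [poissonDeviation]
  linarith

variable {P : Fin n → Fin n → ℝ} {μ : PMF (SimpleGraph (Fin n))} {d : ℝ}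

lemma IsEdgeProduct.bernstein_const (hμ : IsEdgeProduct P μ) (hP : IsEdgeProb P)
    {a : Fin n → Fin n → ℝ} (ha : ∀ i j, a i j = a j i) (ha1 : ∀ i j, |a i j| ≤ 1) (c : ℝ) :
    μ.toMeasure.real {G | 2 * c + ∑ i, ∑ j, offP P i j * a i j ^ 2 ≤
      ∑ i, ∑ j, (adjM G i j - offP P i j) * a i j} ≤ Real.exp (-c) := by
  refine le_trans (measureReal_mono fun G hG => ?_) (hμ.chernoff_const hP ha c)
  refine (le_sub_iff_add_le.2 (Set.mem_ofPred_eq ▸ hG)).trans ?_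
  simp only [← Finset.sum_sub_distrib]
  exact Finset.sum_le_sum fun i _ => Finset.sum_le_sum fun j _ =>
    le_poissonDeviation (hP.offP_nonneg i j) (ha1 i j) _

lemma IsEdgeProduct.bernstein_row (hμ : IsEdgeProduct P μ) (hP : IsEdgeProb P) (v : Fin n)
    {y : SimpleGraph (Fin n) → Fin n → ℝ} (hy : ∀ G w, |y G w| ≤ 1) (c : ℝ) :
    μ.toMeasure.real {G | c + ∑ w, offP P v w * y (G.deleteIncidenceSet v) w ^ 2 ≤
      ∑ w, (adjM G v w - offP P v w) * y (G.deleteIncidenceSet v) w} ≤ Real.exp (-c) := by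
  refine le_trans (measureReal_mono fun G hG => ?_) (hμ.chernoff_row hP v y c)
  refine (le_sub_iff_add_le.2 (Set.mem_ofPred_eq ▸ hG)).trans ?_
  rw [← Finset.sum_sub_distrib]
  exact Finset.sum_le_sum fun w _ => le_poissonDeviation (hP.offP_nonneg v w) (hy _ w) _

variable [NeZero n]

lemma nonneg_of_offP_le (hd : ∀ i j, offP P i j ≤ d / n) : 0 ≤ d := by
  have hn : (0 : ℝ) < n := Nat.cast_pos.2 (NeZero.pos n)
  simpa [offP_self, hn.le, div_nonneg_iff, hn.not_ge] using hd 0 0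

lemma sum_offP_le (hd : ∀ i j, offP P i j ≤ d / n) (v : Fin n) : ∑ w, offP P v w ≤ d := by
  calc ∑ w, offP P v w ≤ ∑ _w : Fin n, d / n := Finset.sum_le_sum fun w _ => hd v w
    _ = d := by simp [mul_div_cancel₀, NeZero.ne n]

lemma IsEdgeProduct.measureReal_degree_gt_le (hμ : IsEdgeProduct P μ) (hP : IsEdgeProb P)
    (hd : ∀ i j, offP P i j ≤ d / n) :
    μ.toMeasure.real {G | ¬ ∀ v, ∑ w, adjM G v w ≤ 3 * d} ≤ n * Real.exp (-d) := by
  refine (measureReal_not_forall_le_card_mul fun v => le_trans (measureReal_mono fun G hG => ?_)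
    (hμ.bernstein_row hP v (y := fun _ _ => 1) (by simp) d)).trans_eq (by rw [Fintype.card_fin])
  rw [Set.mem_ofPred_eq, not_le] at hG
  have := sum_offP_le hd v
  simp only [Set.mem_ofPred_eq, one_pow, mul_one, Finset.sum_sub_distrib]
  linarith

lemma IsEdgeProduct.measureReal_degree_lt_le (hμ : IsEdgeProduct P μ) (hP : IsEdgeProb P)
    (hd : ∀ i j, offP P i j ≤ d / n) {η : ℝ} (hη : η ∈ Set.Ioc 0 1) :
    μ.toMeasure.real {G | ¬ ∀ v, ∑ w, offP P v w - η * d ≤ ∑ w, adjM G v w} ≤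
      n * Real.exp (-(η ^ 2 * d / 4)) := by
  obtain ⟨hη0, hη1⟩ := hη
  refine (measureReal_not_forall_le_card_mul fun v => le_trans (measureReal_mono fun G hG => ?_)
    (hμ.bernstein_row hP v (y := fun _ _ => -(η / 2))
      (fun _ _ => by rw [abs_neg, abs_of_pos] <;> linarith) (η ^ 2 * d / 4))).trans_eq
    (by rw [Fintype.card_fin])
  rw [Set.mem_ofPred_eq, not_le] at hG
  simp only [Set.mem_ofPred_eq, ← Finset.sum_mul, Finset.sum_sub_distrib]
  have := mul_le_mul_of_nonneg_right (sum_offP_le hd v) (sq_nonneg η)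
  have := mul_lt_mul_of_pos_right hG hη0
  linarith

lemma IsEdgeProduct.measureReal_cut_gt_le (hμ : IsEdgeProduct P μ) (hP : IsEdgeProb P)
    (hd : ∀ i j, offP P i j ≤ d / n) {η : ℝ} (hη : η ∈ Set.Ioc 0 1)
    {s : Fin n → Fin n → Prop} (hs : ∀ i j, s i j ↔ s j i) :
    μ.toMeasure.real {G | ¬ ∑ i, ∑ j, (if s i j then adjM G i j else 0) ≤
      ∑ i, ∑ j, (if s i j then offP P i j else 0) + η * d * n} ≤
      Real.exp (-(η ^ 2 * d * n / 8)) := by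
  obtain ⟨hη0, hη1⟩ := hη
  refine le_trans (measureReal_mono fun G hG => ?_) (hμ.bernstein_const hP
    (a := fun i j => if s i j then η / 2 else 0) (fun i j => by simp only [hs i j])
    (fun i j => by split_ifs <;> simp [abs_le]; constructor <;> linarith) _)
  rw [Set.mem_ofPred_eq, not_le] at hG
  rw [Set.mem_ofPred_eq]
  have hvar : ∑ i, ∑ j, offP P i j * (if s i j then η / 2 else 0) ^ 2 ≤ n * d * (η / 2) ^ 2 :=
    calc _ ≤ ∑ i, ∑ j, offP P i j * (η / 2) ^ 2 := by
          refine Finset.sum_le_sum fun i _ => Finset.sum_le_sum fun j _ =>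
            mul_le_mul_of_nonneg_left ?_ (hP.offP_nonneg i j)
          split_ifs
          exacts [le_rfl, by simpa using sq_nonneg (η / 2)]
      _ ≤ ∑ _i : Fin n, d * (η / 2) ^ 2 := by
          simp only [← Finset.sum_mul]
          gcongr with i
          exact sum_offP_le hd i
      _ = _ := by simp; ring
  have hlin : ∑ i, ∑ j, (adjM G i j - offP P i j) * (if s i j then η / 2 else 0) =
      (∑ i, ∑ j, (if s i j then adjM G i j else 0) -
        ∑ i, ∑ j, if s i j then offP P i j else 0) * (η / 2) := by
    simp only [← Finset.sum_sub_distrib, Finset.sum_mul]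
    exact Finset.sum_congr rfl fun i _ => Finset.sum_congr rfl fun j _ => by split_ifs <;> ring
  rw [hlin]
  nlinarith

end Events

section NormFacts

variable {ι : Type*} [Fintype ι]

lemma dotProduct_mulVec_eq_sum (M : Matrix ι ι ℝ) (x y : ι → ℝ) :
    x ⬝ᵥ M *ᵥ y = ∑ i, ∑ j, M i j * (x i * y j) := by
  simp only [dotProduct, mulVec, Finset.mul_sum]
  exact Finset.sum_congr rfl fun i _ => Finset.sum_congr rfl fun j _ => by ring

lemma dotProduct_self_eq_sum_sq (x : ι → ℝ) : x ⬝ᵥ x = ∑ i, x i ^ 2 := by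
  simp only [dotProduct, sq]

lemma dotProduct_self_nonneg (x : ι → ℝ) : 0 ≤ x ⬝ᵥ x :=
  Finset.sum_nonneg fun i _ => mul_self_nonneg (x i)

lemma sum_abs_le_sqrt_card_mul (x : ι → ℝ) :
    ∑ i, |x i| ≤ Real.sqrt (Fintype.card ι * (x ⬝ᵥ x)) := by
  refine Real.le_sqrt_of_sq_le ?_
  simpa [dotProduct_self_eq_sum_sq] using
    sq_sum_le_card_mul_sum_sq (s := Finset.univ) (f := fun i => |x i|)

lemma abs_le_linf (x : Fin n → ℝ) (i : Fin n) : |x i| ≤ linf x :=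
  le_ciSup (f := fun i => |x i|) (Set.finite_range _).bddAbove i

lemma linf_nonneg (x : Fin n → ℝ) : 0 ≤ linf x := Real.iSup_nonneg fun i => abs_nonneg (x i)

end NormFacts

section QuadraticFormEvents

variable {P : Fin n → Fin n → ℝ} {μ : PMF (SimpleGraph (Fin n))} {d : ℝ}

lemma sum_sum_ite_mem (S : Finset (Fin n)) (F : Fin n → Fin n → ℝ) :
    ∑ i, ∑ j, (if i ∈ S ∧ j ∈ S then F i j else 0) = ∑ i ∈ S, ∑ j ∈ S, F i j := by
  simp only [ite_and, Finset.sum_ite_irrel, Finset.sum_const_zero, Finset.sum_ite_mem,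
    Finset.univ_inter]

lemma sum_sum_offP_mul_sq_mul_sq_le (hd : ∀ i j, offP P i j ≤ d / n) (y : Fin n → ℝ) :
    ∑ i, ∑ j, offP P i j * (y i * y j) ^ 2 ≤ d / n * (y ⬝ᵥ y) ^ 2 :=
  calc _ ≤ ∑ i, ∑ j, d / n * (y i ^ 2 * y j ^ 2) := by
        simp only [mul_pow]
        gcongr with i _ j _
        exact hd i j
    _ = _ := by
        simp only [← Finset.mul_sum]
        rw [sq (y ⬝ᵥ y), dotProduct_self_eq_sum_sq, Finset.sum_mul_sum]
        simp only [Finset.mul_sum]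

variable [NeZero n]

lemma IsEdgeProduct.measureReal_quadratic_gt_le (hμ : IsEdgeProduct P μ) (hP : IsEdgeProb P)
    (hd : ∀ i j, offP P i j ≤ d / n) {ε b : ℝ} (hb : 0 < b) (hbε : b ≤ ε / 32) {y : Fin n → ℝ}
    (hy : ∀ i j, b * n * |y i * y j| ≤ 1) (hy2 : y ⬝ᵥ y ≤ 4) :
    μ.toMeasure.real {G | ¬ y ⬝ᵥ adjM G *ᵥ y ≤ y ⬝ᵥ offP P *ᵥ y + ε * d} ≤
      Real.exp (-(b * ε * n * d / 4)) := by
  have hn : (0 : ℝ) < n := Nat.cast_pos.2 (NeZero.pos n)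
  have hd0 := nonneg_of_offP_le hd
  refine le_trans (measureReal_mono fun G hG => ?_) (hμ.bernstein_const hP
    (a := fun i j => b * n * (y i * y j)) (fun i j => by ring)
    (fun i j => by rw [abs_mul, abs_of_pos (by positivity)]; exact hy i j) _)
  rw [Set.mem_ofPred_eq, not_le] at hG
  rw [Set.mem_ofPred_eq]
  have hvar : ∑ i, ∑ j, offP P i j * (b * n * (y i * y j)) ^ 2 ≤ b * n * (ε / 2 * d) :=
    calc _ = (b * n) ^ 2 * ∑ i, ∑ j, offP P i j * (y i * y j) ^ 2 := by
          simp only [mul_pow (b * n), mul_left_comm _ ((b * n) ^ 2), ← Finset.mul_sum]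
      _ ≤ (b * n) ^ 2 * (d / n * 4 ^ 2) := by
          gcongr
          exact (sum_sum_offP_mul_sq_mul_sq_le hd y).trans
            (by have := dotProduct_self_nonneg y; gcongr)
      _ = b * n * (16 * b * d) := by field_simp; ring
      _ ≤ b * n * (ε / 2 * d) := by gcongr; linarith
  have hlin : ∑ i, ∑ j, (adjM G i j - offP P i j) * (b * n * (y i * y j)) =
      b * n * (y ⬝ᵥ adjM G *ᵥ y - y ⬝ᵥ offP P *ᵥ y) := by
    simp only [dotProduct_mulVec_eq_sum, ← Finset.sum_sub_distrib, Finset.mul_sum]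
    exact Finset.sum_congr rfl fun i _ => Finset.sum_congr rfl fun j _ => by ring
  have hdev : b * n * (ε * d) ≤ b * n * (y ⬝ᵥ adjM G *ᵥ y - y ⬝ᵥ offP P *ᵥ y) := by
    gcongr; linarith
  rw [hlin]
  linarith

/-- The vector with entries `k i` on the grid of mesh `h / √n`. -/
def gridVec (h : ℝ) (k : Fin n → ℤ) : Fin n → ℝ := fun i => h * k i / Real.sqrt n

/-- The quadratic form of the adjacency matrix is bounded by that of its expectation on the vectors
of norm at most `2` with entries on the grid of mesh `h / √n` in `[-h M / √n, h M / √n]`. -/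
def FlatBound (P : Fin n → Fin n → ℝ) (d h : ℝ) (M : ℕ) (ε : ℝ) (G : SimpleGraph (Fin n)) :
    Prop :=
  ∀ k : Fin n → Finset.Icc (-(M : ℤ)) M, gridVec h (fun i => k i) ⬝ᵥ gridVec h (fun i => k i) ≤ 4 →
    gridVec h (fun i => k i) ⬝ᵥ adjM G *ᵥ gridVec h (fun i => k i) ≤
      gridVec h (fun i => k i) ⬝ᵥ offP P *ᵥ gridVec h (fun i => k i) + ε * d

lemma abs_gridVec_mul_gridVec_le {h : ℝ} {M : ℕ} (k : Fin n → Finset.Icc (-(M : ℤ)) M)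
    (i j : Fin n) :
    n * |gridVec h (fun i => k i) i * gridVec h (fun i => k i) j| ≤ (h * M) ^ 2 := by
  have hn : (0 : ℝ) < n := Nat.cast_pos.2 (NeZero.pos n)
  have hk (i : Fin n) : |((k i : ℤ) : ℝ)| ≤ M := by
    rw [abs_le]
    exact_mod_cast Finset.mem_Icc.1 (k i).2
  calc n * |gridVec h (fun i => k i) i * gridVec h (fun i => k i) j|
      = h ^ 2 * (|((k i : ℤ) : ℝ)| * |((k j : ℤ) : ℝ)|) := by
        simp only [gridVec]
        rw [div_mul_div_comm, Real.mul_self_sqrt hn.le, abs_div, abs_of_pos hn, mul_mul_mul_comm,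
          abs_mul, abs_mul_self, abs_mul]
        field_simp
    _ ≤ h ^ 2 * (M * M) := by gcongr <;> exact hk _
    _ = (h * M) ^ 2 := by ring

lemma IsEdgeProduct.measureReal_not_flatBound_le (hμ : IsEdgeProduct P μ) (hP : IsEdgeProb P)
    (hd : ∀ i j, offP P i j ≤ d / n) {h ε b : ℝ} {M : ℕ} (hb : 0 < b) (hbε : b ≤ ε / 32)
    (hbM : b * (h * M) ^ 2 ≤ 1) :
    μ.toMeasure.real {G | ¬ FlatBound P d h M ε G} ≤
      (2 * M + 1) ^ n * Real.exp (-(b * ε * n * d / 4)) := by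
  have hcard : (Fintype.card (Fin n → Finset.Icc (-(M : ℤ)) M) : ℝ) = (2 * M + 1) ^ n := by
    have : ((M : ℤ) + 1 + M).toNat = 2 * M + 1 := by lia
    simp [this]
  refine (measureReal_not_forall_le_card_mul fun k => ?_).trans_eq (by rw [hcard])
  by_cases hk : gridVec h (fun i => k i) ⬝ᵥ gridVec h (fun i => k i) ≤ 4
  · simp only [hk, true_imp_iff]
    refine hμ.measureReal_quadratic_gt_le hP hd hb hbε (fun i j => ?_) hk
    rw [mul_assoc]
    exact (mul_le_mul_of_nonneg_left (abs_gridVec_mul_gridVec_le k i j) hb.le).trans hbM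
  · simpa [hk] using (Real.exp_pos _).le

/-- Vertex sets of size at most `n / K` span few edges; the double sum counts each edge twice. -/
def SparseSmallSets (d K ε : ℝ) (G : SimpleGraph (Fin n)) : Prop :=
  ∀ S : Finset (Fin n), K * S.card ≤ n → ∑ i ∈ S, ∑ j ∈ S, adjM G i j ≤ ε * d * S.card

lemma IsEdgeProduct.measureReal_span_gt_le (hμ : IsEdgeProduct P μ) (hP : IsEdgeProb P)
    (hd : ∀ i j, offP P i j ≤ d / n) {K ε : ℝ} (hε : 0 < ε) (hK : Real.exp (9 / ε) ≤ K)
    {S : Finset (Fin n)} (hS : K * S.card ≤ n) :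
    μ.toMeasure.real {G | ¬ ∑ i ∈ S, ∑ j ∈ S, adjM G i j ≤ ε * d * S.card} ≤
      Real.exp (-(4 * d)) ^ S.card := by
  have hn : (0 : ℝ) < n := Nat.cast_pos.2 (NeZero.pos n)
  have hd0 := nonneg_of_offP_le hd
  rw [← Real.exp_nat_mul, mul_neg]
  refine le_trans (measureReal_mono fun G hG => ?_) (hμ.chernoff_const hP
    (a := fun i j => if i ∈ S ∧ j ∈ S then 9 / ε else 0) (fun i j => by simp only [and_comm]) _)
  rw [Set.mem_ofPred_eq, not_le] at hG
  have hmean : ∑ i ∈ S, ∑ j ∈ S, offP P i j * (Real.exp (9 / ε) - 1) ≤ d * S.card :=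
    calc _ ≤ ∑ _i ∈ S, ∑ _j ∈ S, d / n * K := by
          refine Finset.sum_le_sum fun i _ => Finset.sum_le_sum fun j _ =>
            mul_le_mul (hd i j) (by linarith) ?_ (by positivity)
          linarith [Real.one_le_exp (x := 9 / ε) (by positivity)]
      _ = d * S.card * (K * S.card / n) := by simp; ring
      _ ≤ d * S.card := mul_le_of_le_one_right (by positivity) ((div_le_one hn).2 hS)
  have hsum : ∑ i, ∑ j, poissonDeviation (offP P i j) (if i ∈ S ∧ j ∈ S then 9 / ε else 0)
        (adjM G i j) = (∑ i ∈ S, ∑ j ∈ S, adjM G i j) * (9 / ε) -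
          ∑ i ∈ S, ∑ j ∈ S, offP P i j * (Real.exp (9 / ε) - 1) := by
    simp only [Finset.sum_mul, ← Finset.sum_sub_distrib]
    rw [← sum_sum_ite_mem S]
    exact Finset.sum_congr rfl fun i _ => Finset.sum_congr rfl fun j _ => by
      split_ifs <;> simp [poissonDeviation]
  rw [Set.mem_ofPred_eq, hsum]
  have hdense : ε * d * S.card * (9 / ε) ≤ (∑ i ∈ S, ∑ j ∈ S, adjM G i j) * (9 / ε) := by gcongr
  have hcancel : ε * d * S.card * (9 / ε) = 9 * d * S.card := by field_simp
  linarith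

lemma IsEdgeProduct.measureReal_not_sparseSmallSets_le (hμ : IsEdgeProduct P μ)
    (hP : IsEdgeProb P) (hd : ∀ i j, offP P i j ≤ d / n) {K ε : ℝ} (hε : 0 < ε)
    (hK : Real.exp (9 / ε) ≤ K) :
    μ.toMeasure.real {G | ¬ SparseSmallSets d K ε G} ≤
      Real.exp (n * Real.exp (-(4 * d))) - 1 := by
  set t := Real.exp (-(4 * d))
  have ht : 0 ≤ t := (Real.exp_pos _).le
  have hbound (S : Finset (Fin n)) : μ.toMeasure.real {G | ¬ (K * S.card ≤ n →
      ∑ i ∈ S, ∑ j ∈ S, adjM G i j ≤ ε * d * S.card)} ≤ t ^ S.card - if S = ∅ then 1 else 0 := by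
    rcases S.eq_empty_or_nonempty with rfl | hne
    · simp
    by_cases hS : K * S.card ≤ n
    · simpa [hS, hne.ne_empty] using hμ.measureReal_span_gt_le hP hd hε hK hS
    · simpa [hS, hne.ne_empty] using pow_nonneg ht _
  calc _ ≤ ∑ S : Finset (Fin n), (t ^ S.card - if S = ∅ then 1 else 0) :=
        (measureReal_not_forall_le _ _).trans (Finset.sum_le_sum fun S _ => hbound S)
    _ = (t + 1) ^ n - 1 := by
        rw [Finset.sum_sub_distrib]
        simpa using Fin.sum_pow_mul_eq_add_pow t 1
    _ ≤ Real.exp t ^ n - 1 := by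
        gcongr
        exact Real.add_one_le_exp t
    _ = _ := by rw [← Real.exp_nat_mul]

end QuadraticFormEvents

section LeaveOneOutEvent

variable {P : Fin n → Fin n → ℝ} {μ : PMF (SimpleGraph (Fin n))} {d : ℝ} [NeZero n]

lemma sum_offP_mul_abs_div_linf_le (hd : ∀ i j, offP P i j ≤ d / n) (v : Fin n)
    {f : Fin n → ℝ} (hf : f ⬝ᵥ f ≤ 1) :
    ∑ w, offP P v w * (|f w| / linf f) ≤ d / Real.sqrt n / linf f := by
  have hd0 := nonneg_of_offP_le hd
  have hl0 := linf_nonneg f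
  calc _ ≤ ∑ w, d / n * (|f w| / linf f) := by gcongr with w; exact hd v w
    _ = d / n * (∑ w, |f w|) / linf f := by rw [← Finset.mul_sum, ← Finset.sum_div, mul_div_assoc]
    _ ≤ d / n * Real.sqrt n / linf f := by
        gcongr
        refine (sum_abs_le_sqrt_card_mul f).trans (Real.sqrt_le_sqrt ?_)
        simpa using mul_le_of_le_one_right n.cast_nonneg hf
    _ = _ := by rw [div_mul_eq_mul_div, mul_div_assoc, Real.sqrt_div_self', mul_one_div]

lemma IsEdgeProduct.measureReal_row_gt_le (hμ : IsEdgeProduct P μ) (hP : IsEdgeProb P)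
    (hd : ∀ i j, offP P i j ≤ d / n) {φ : SimpleGraph (Fin n) → Fin n → Fin n → ℝ}
    (hφ : ∀ H v, φ H v ⬝ᵥ φ H v ≤ 1) (c : ℝ) :
    μ.toMeasure.real {G | ¬ ∀ v, ∑ w, adjM G v w * |φ (G.deleteIncidenceSet v) v w| ≤
      2 * d / Real.sqrt n + c * linf (φ (G.deleteIncidenceSet v) v)} ≤ n * Real.exp (-c) := by
  have hd0 := nonneg_of_offP_le hd
  have hratio (f : Fin n → ℝ) (w) : |(|f w| / linf f)| ≤ 1 := by
    rw [abs_of_nonneg (div_nonneg (abs_nonneg _) (linf_nonneg f))]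
    exact div_le_one_of_le₀ (abs_le_linf f w) (linf_nonneg f)
  refine (measureReal_not_forall_le_card_mul fun v => le_trans (measureReal_mono fun G hG => ?_)
    (hμ.bernstein_row hP v (y := fun H w => |φ H v w| / linf (φ H v))
      (fun H w => hratio _ w) c)).trans_eq (by rw [Fintype.card_fin])
  rw [Set.mem_ofPred_eq, not_le] at hG
  set f := φ (G.deleteIncidenceSet v) v
  have hf : 0 < linf f := by
    refine (linf_nonneg f).lt_of_ne fun h0 => hG.not_ge ?_
    have hzero (w) : f w = 0 := abs_nonpos_iff.1 ((abs_le_linf f w).trans h0.ge)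
    simp only [hzero, abs_zero, mul_zero, Finset.sum_const_zero, ← h0]
    positivity
  have hmean := sum_offP_mul_abs_div_linf_le hd v (hφ (G.deleteIncidenceSet v) v)
  have hvar : ∑ w, offP P v w * (|f w| / linf f) ^ 2 ≤ ∑ w, offP P v w * (|f w| / linf f) := by
    gcongr with w
    · exact hP.offP_nonneg v w
    · exact pow_le_of_le_one (by positivity) ((le_abs_self _).trans (hratio f w)) two_ne_zero
  have hdev : 2 * d / Real.sqrt n / linf f + c ≤ ∑ w, adjM G v w * (|f w| / linf f) := by
    simp only [← mul_div_assoc, ← Finset.sum_div]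
    rw [div_add' _ _ _ hf.ne']
    gcongr
  simp only [Set.mem_ofPred_eq, sub_mul, Finset.sum_sub_distrib]
  linarith [show 2 * d / Real.sqrt n / linf f = 2 * (d / Real.sqrt n / linf f) by ring]

end LeaveOneOutEvent

section Comparison

variable {ι : Type*}

-- Peel off the level `min a` over the whole support: this is the layer-cake formula.
lemma sum_sum_mul_min_le (M : Matrix ι ι ℝ) (c : ℝ) (S : Finset ι) {a : ι → ℝ}
    (hS : ∀ T ⊆ S, ∑ i ∈ T, ∑ j ∈ T, M i j ≤ c * T.card) (ha : ∀ i ∈ S, 0 ≤ a i) :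
    ∑ i ∈ S, ∑ j ∈ S, M i j * min (a i) (a j) ≤ c * ∑ i ∈ S, a i := by
  induction S using Finset.strongInduction generalizing a with
  | H S ih =>
    rcases S.eq_empty_or_nonempty with rfl | hne
    · simp
    obtain ⟨i₀, hi₀, hmin⟩ := S.exists_min_image a hne
    have hpeel : ∑ i ∈ S, ∑ j ∈ S, M i j * min (a i) (a j) =
        ∑ i ∈ S, ∑ j ∈ S, M i j * min (a i - a i₀) (a j - a i₀) +
          a i₀ * ∑ i ∈ S, ∑ j ∈ S, M i j := by
      simp only [Finset.mul_sum, ← Finset.sum_add_distrib]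
      refine Finset.sum_congr rfl fun i _ => Finset.sum_congr rfl fun j _ => ?_
      rw [min_sub_sub_right]
      ring
    have hrest : ∑ i ∈ S, ∑ j ∈ S, M i j * min (a i - a i₀) (a j - a i₀) =
        ∑ i ∈ S.erase i₀, ∑ j ∈ S.erase i₀, M i j * min (a i - a i₀) (a j - a i₀) := by
      have hzero {i j : ι} (hi : i ∈ S) (hj : j ∈ S) (hij : i = i₀ ∨ j = i₀) :
          M i j * min (a i - a i₀) (a j - a i₀) = 0 := by
        rcases hij with rfl | rfl
        · rw [sub_self, min_eq_left (sub_nonneg.2 (hmin j hj)), mul_zero]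
        · rw [sub_self, min_eq_right (sub_nonneg.2 (hmin i hi)), mul_zero]
      rw [← Finset.sum_erase S (Finset.sum_eq_zero fun j hj => hzero hi₀ hj (.inl rfl))]
      exact Finset.sum_congr rfl fun i hi =>
        (Finset.sum_erase S (hzero (Finset.mem_of_mem_erase hi) hi₀ (.inr rfl))).symm
    have hsum : ∑ i ∈ S.erase i₀, (a i - a i₀) = ∑ i ∈ S, a i - S.card * a i₀ := by
      rw [Finset.sum_erase S (sub_self _), Finset.sum_sub_distrib, Finset.sum_const, nsmul_eq_mul]
    have hih := ih (S.erase i₀) (Finset.erase_ssubset hi₀) (a := fun i => a i - a i₀)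
      (fun T hT => hS T (hT.trans (Finset.erase_subset _ _)))
      (fun i hi => sub_nonneg.2 (hmin i (Finset.mem_of_mem_erase hi)))
    have hlevel := mul_le_mul_of_nonneg_left (hS S le_rfl) (ha i₀ hi₀)
    rw [hsum] at hih
    rw [hpeel, hrest]
    linarith

lemma abs_mul_le_sq_div_add {s : ℝ} (hs : 0 < s) (a b : ℝ) :
    |a * b| ≤ a ^ 2 / (2 * s) + s / 2 * b ^ 2 := by
  have hid : |a| ^ 2 / (2 * s) + s / 2 * |b| ^ 2 - |a| * |b| = (|a| - s * |b|) ^ 2 / (2 * s) := by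
    field_simp
    ring
  have hsq : 0 ≤ (|a| - s * |b|) ^ 2 / (2 * s) := by positivity
  rw [abs_mul, ← sq_abs a, ← sq_abs b]
  linarith

lemma abs_mul_le_min_sq_add {s : ℝ} (hs : 0 < s) (a b : ℝ) :
    |a * b| ≤ min (a ^ 2) (b ^ 2) / (2 * s) + (s / 2 * a ^ 2 + s / 2 * b ^ 2) := by
  wlog hab : |a| ≤ |b| generalizing a b
  · rw [mul_comm, min_comm, add_comm (s / 2 * a ^ 2)]
    exact this b a (le_of_not_ge hab)
  rw [min_eq_left (sq_le_sq.2 hab)]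
  refine (abs_mul_le_sq_div_add hs a b).trans (add_le_add_right ?_ _)
  exact le_add_of_nonneg_left (by positivity)

/-- Truncation to zero of the numbers of modulus larger than `T`. -/
def trunc (T a : ℝ) : ℝ := if |a| ≤ T then a else 0

lemma abs_trunc_le {T : ℝ} (hT : 0 ≤ T) (a : ℝ) : |trunc T a| ≤ T := by
  unfold trunc
  split_ifs with h
  · exact h
  · rwa [abs_zero]

lemma trunc_sq_le (T a : ℝ) : trunc T a ^ 2 ≤ a ^ 2 := by
  unfold trunc
  split_ifs
  · exact le_rfl
  · simpa using sq_nonneg a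

lemma abs_mul_sub_trunc_mul_trunc_le {T ε : ℝ} (hT : 0 < T) (hε : 0 < ε) (hε1 : ε ≤ 1) (a b : ℝ) :
    |a * b - trunc T a * trunc T b| ≤
      (ε * a ^ 2 + ε * b ^ 2) + if ε * T ≤ |a| ∧ ε * T ≤ |b| then |a * b| else 0 := by
  by_cases h : |a| ≤ T ∧ |b| ≤ T
  · simp only [trunc, h, if_true, sub_self, abs_zero]
    positivity
  have hzero : trunc T a * trunc T b = 0 := by
    unfold trunc
    split_ifs <;> simp_all
  rw [hzero, sub_zero]
  split_ifs with hlarge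
  · exact le_add_of_nonneg_left (by positivity)
  have hεT : ε * T ≤ T := mul_le_of_le_one_left hT.le hε1
  have hunbalanced {s t : ℝ} (ht : 0 ≤ t) (hs : T < s) (hts : t < ε * T) :
      s * t ≤ ε * s ^ 2 + ε * t ^ 2 := by
    have hle : t ≤ ε * s := by nlinarith
    nlinarith [sq_nonneg t]
  rw [add_zero, abs_mul, ← sq_abs a, ← sq_abs b]
  rcases not_and_or.1 h with ha | hb
  · exact hunbalanced (abs_nonneg b) (not_le.1 ha)
      (not_le.1 fun hb => hlarge ⟨hεT.trans (not_le.1 ha).le, hb⟩)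
  · rw [mul_comm, add_comm]
    exact hunbalanced (abs_nonneg a) (not_le.1 hb)
      (not_le.1 fun ha => hlarge ⟨ha, hεT.trans (not_le.1 hb).le⟩)

variable [Fintype ι]

lemma abs_dotProduct_mulVec_sub_le {M : Matrix ι ι ℝ} (hM : ∀ i j, 0 ≤ M i j) {x y : ι → ℝ}
    {F : ι → ι → ℝ} (hF : ∀ i j, |x i * x j - y i * y j| ≤ F i j) :
    |x ⬝ᵥ M *ᵥ x - y ⬝ᵥ M *ᵥ y| ≤ ∑ i, ∑ j, M i j * F i j := by
  simp only [dotProduct_mulVec_eq_sum, ← Finset.sum_sub_distrib, ← mul_sub]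
  refine (Finset.abs_sum_le_sum_abs _ _).trans (Finset.sum_le_sum fun i _ => ?_)
  refine (Finset.abs_sum_le_sum_abs _ _).trans (Finset.sum_le_sum fun j _ => ?_)
  rw [abs_mul, abs_of_nonneg (hM i j)]
  exact mul_le_mul_of_nonneg_left (hF i j) (hM i j)

lemma dotProduct_mulVec_le_of_unit {M N : Matrix ι ι ℝ} {c : ℝ}
    (h : ∀ x : ι → ℝ, x ⬝ᵥ x = 1 → x ⬝ᵥ M *ᵥ x ≤ x ⬝ᵥ N *ᵥ x + c) (x : ι → ℝ) :
    x ⬝ᵥ M *ᵥ x ≤ x ⬝ᵥ N *ᵥ x + c * (x ⬝ᵥ x) := by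
  rcases (dotProduct_self_nonneg x).eq_or_lt with h0 | h0
  · simp [dotProduct_self_eq_zero.1 h0.symm]
  have hsqrt : Real.sqrt (x ⬝ᵥ x) * Real.sqrt (x ⬝ᵥ x) = x ⬝ᵥ x := Real.mul_self_sqrt h0.le
  have hunit := h ((Real.sqrt (x ⬝ᵥ x))⁻¹ • x) (by
    simp only [smul_dotProduct, dotProduct_smul, smul_eq_mul]
    rw [← mul_assoc, ← mul_inv, hsqrt, inv_mul_cancel₀ h0.ne'])
  simp only [mulVec_smul, smul_dotProduct, dotProduct_smul, smul_eq_mul, ← mul_assoc, ← mul_inv,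
    hsqrt] at hunit
  field_simp at hunit
  linarith

lemma sum_sum_mul_add_le {M : Matrix ι ι ℝ} {D : ℝ} (hs : ∀ i j, M i j = M j i)
    (hD : ∀ i, ∑ j, M i j ≤ D) {f g : ι → ℝ} (hf : ∀ i, 0 ≤ f i) (hg : ∀ i, 0 ≤ g i) :
    ∑ i, ∑ j, M i j * (f i + g j) ≤ D * (∑ i, f i + ∑ i, g i) := by
  have hrow {f : ι → ℝ} (hf : ∀ i, 0 ≤ f i) : ∑ i, ∑ j, M i j * f i ≤ D * ∑ i, f i := by
    simp only [← Finset.sum_mul, Finset.mul_sum]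
    exact Finset.sum_le_sum fun i _ => mul_le_mul_of_nonneg_right (hD i) (hf i)
  have hcol : ∑ i, ∑ j, M i j * g j = ∑ i, ∑ j, M i j * g i := by
    rw [Finset.sum_comm]
    simp only [hs]
  simp only [mul_add, Finset.sum_add_distrib, hcol]
  exact add_le_add (hrow hf) (hrow hg)

lemma abs_dotProduct_mulVec_sub_le_of_close {M : Matrix ι ι ℝ} {D : ℝ} (h0 : ∀ i j, 0 ≤ M i j)
    (hs : ∀ i j, M i j = M j i) (hD0 : 0 ≤ D) (hD : ∀ i, ∑ j, M i j ≤ D) {x y : ι → ℝ} {h : ℝ}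
    (hh : 0 < h) (hx : x ⬝ᵥ x ≤ 1) (hy : y ⬝ᵥ y ≤ 4) (hxy : (x - y) ⬝ᵥ (x - y) ≤ h ^ 2) :
    |x ⬝ᵥ M *ᵥ x - y ⬝ᵥ M *ᵥ y| ≤ 4 * D * h := by
  have hF (i j : ι) : |x i * x j - y i * y j| ≤
      ((x i - y i) ^ 2 / (2 * h) + h / 2 * y i ^ 2) +
        ((x j - y j) ^ 2 / (2 * h) + h / 2 * x j ^ 2) := by
    have htri := abs_add_le ((x i - y i) * x j) ((x j - y j) * y i)
    have hi := abs_mul_le_sq_div_add hh (x i - y i) (x j)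
    have hj := abs_mul_le_sq_div_add hh (x j - y j) (y i)
    rw [show x i * x j - y i * y j = (x i - y i) * x j + (x j - y j) * y i by ring]
    linarith
  simp only [dotProduct_self_eq_sum_sq, Pi.sub_apply] at hx hy hxy
  refine (abs_dotProduct_mulVec_sub_le h0 hF).trans ((sum_sum_mul_add_le hs hD
    (fun i => by positivity) (fun i => by positivity)).trans ?_)
  simp only [Finset.sum_add_distrib, ← Finset.mul_sum, ← Finset.sum_div]
  have hdiff : (∑ i, (x i - y i) ^ 2) / (2 * h) ≤ h / 2 := by
    rw [div_le_iff₀ (by positivity)]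
    linarith
  calc _ ≤ D * (h / 2 + h / 2 * 4 + (h / 2 + h / 2 * 1)) := by gcongr
    _ ≤ 4 * D * h := by nlinarith [mul_nonneg hD0 hh.le]

lemma abs_dotProduct_mulVec_sub_trunc_le {M : Matrix ι ι ℝ} {D : ℝ} (h0 : ∀ i j, 0 ≤ M i j)
    (hs : ∀ i j, M i j = M j i) (hD : ∀ i, ∑ j, M i j ≤ D) {T ε : ℝ} (hT : 0 < T) (hε : 0 < ε)
    (hε1 : ε ≤ 1) (x : ι → ℝ) :
    |x ⬝ᵥ M *ᵥ x - (fun i => trunc T (x i)) ⬝ᵥ M *ᵥ fun i => trunc T (x i)| ≤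
      2 * ε * D * (x ⬝ᵥ x) + ∑ i with ε * T ≤ |x i|, ∑ j with ε * T ≤ |x j|,
        M i j * |x i * x j| := by
  refine (abs_dotProduct_mulVec_sub_le h0 fun i j =>
    abs_mul_sub_trunc_mul_trunc_le hT hε hε1 (x i) (x j)).trans ?_
  have hmass := sum_sum_mul_add_le hs hD (f := fun i => ε * x i ^ 2) (g := fun i => ε * x i ^ 2)
    (fun i => by positivity) (fun i => by positivity)
  have hlarge : ∑ i, ∑ j, M i j * (if ε * T ≤ |x i| ∧ ε * T ≤ |x j| then |x i * x j| else 0) =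
      ∑ i with ε * T ≤ |x i|, ∑ j with ε * T ≤ |x j|, M i j * |x i * x j| := by
    simp only [mul_ite, mul_zero, ite_and, Finset.sum_filter, Finset.sum_ite_irrel,
      Finset.sum_const_zero]
  simp only [← Finset.mul_sum, ← dotProduct_self_eq_sum_sq] at hmass
  simp only [mul_add (M _ _) (_ + _), Finset.sum_add_distrib, hlarge]
  linarith

lemma card_filter_le_abs_mul_sq_le {t : ℝ} (ht : 0 ≤ t) (x : ι → ℝ) :
    (Finset.univ.filter fun i => t ≤ |x i|).card * t ^ 2 ≤ x ⬝ᵥ x := by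
  rw [← nsmul_eq_mul, ← Finset.sum_const, dotProduct_self_eq_sum_sq]
  refine (Finset.sum_le_sum fun i hi => ?_).trans
    (Finset.sum_le_univ_sum_of_nonneg fun i => sq_nonneg (x i))
  rw [← sq_abs (x i)]
  exact pow_le_pow_left₀ ht (Finset.mem_filter.1 hi).2 2

lemma sum_sq_le_dotProduct_self (S : Finset ι) (x : ι → ℝ) : ∑ i ∈ S, x i ^ 2 ≤ x ⬝ᵥ x := by
  rw [dotProduct_self_eq_sum_sq]
  exact Finset.sum_le_univ_sum_of_nonneg fun i => sq_nonneg (x i)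

lemma sum_sum_mul_abs_le_of_entry_le {M : Matrix ι ι ℝ} {c : ℝ} (hc0 : 0 ≤ c)
    (hc : ∀ i j, M i j ≤ c) (U : Finset ι) (x : ι → ℝ) :
    ∑ i ∈ U, ∑ j ∈ U, M i j * |x i * x j| ≤ c * U.card * (x ⬝ᵥ x) :=
  calc _ ≤ ∑ i ∈ U, ∑ j ∈ U, c * |x i * x j| := by gcongr; exact hc _ _
    _ = c * (∑ i ∈ U, |x i|) ^ 2 := by
        simp only [abs_mul, ← Finset.mul_sum, sq, Finset.sum_mul_sum]
    _ ≤ c * (U.card * ∑ i ∈ U, |x i| ^ 2) := by gcongr; exact sq_sum_le_card_mul_sum_sq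
    _ ≤ c * U.card * (x ⬝ᵥ x) := by
        simp only [sq_abs, mul_assoc]
        gcongr
        exact sum_sq_le_dotProduct_self U x

lemma sum_sum_mul_abs_le_of_sparse {M : Matrix ι ι ℝ} {D δ s : ℝ} (h0 : ∀ i j, 0 ≤ M i j)
    (hs : ∀ i j, M i j = M j i) (hD : ∀ i, ∑ j, M i j ≤ D) (hs0 : 0 < s) (hδ : 0 ≤ δ)
    {U : Finset ι} (hU : ∀ T ⊆ U, ∑ i ∈ T, ∑ j ∈ T, M i j ≤ s ^ 2 * δ * T.card) (x : ι → ℝ) :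
    ∑ i ∈ U, ∑ j ∈ U, M i j * |x i * x j| ≤ s * (δ / 2 + D) * (x ⬝ᵥ x) := by
  have hmin : ∑ i ∈ U, ∑ j ∈ U, M i j * min (x i ^ 2) (x j ^ 2) ≤ s ^ 2 * δ * (x ⬝ᵥ x) :=
    (sum_sum_mul_min_le M _ U hU fun i _ => sq_nonneg (x i)).trans (by
      gcongr
      exact sum_sq_le_dotProduct_self U x)
  have hmass : ∑ i ∈ U, ∑ j ∈ U, M i j * (s / 2 * x i ^ 2 + s / 2 * x j ^ 2) ≤
      D * (s * (x ⬝ᵥ x)) := by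
    have hterm (i j : ι) : 0 ≤ M i j * (s / 2 * x i ^ 2 + s / 2 * x j ^ 2) :=
      mul_nonneg (h0 i j) (by positivity)
    calc _ ≤ ∑ i, ∑ j, M i j * (s / 2 * x i ^ 2 + s / 2 * x j ^ 2) :=
          (Finset.sum_le_sum fun i _ => Finset.sum_le_univ_sum_of_nonneg (hterm i)).trans
            (Finset.sum_le_univ_sum_of_nonneg fun i => Finset.sum_nonneg fun j _ => hterm i j)
      _ ≤ D * (∑ i, s / 2 * x i ^ 2 + ∑ i, s / 2 * x i ^ 2) :=
          sum_sum_mul_add_le hs hD (fun i => by positivity) fun i => by positivity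
      _ = D * (s * (x ⬝ᵥ x)) := by rw [← Finset.mul_sum, dotProduct_self_eq_sum_sq]; ring
  calc _ ≤ ∑ i ∈ U, ∑ j ∈ U, (M i j * min (x i ^ 2) (x j ^ 2) / (2 * s) +
          M i j * (s / 2 * x i ^ 2 + s / 2 * x j ^ 2)) := by
        gcongr with i _ j _
        rw [mul_div_assoc, ← mul_add]
        exact mul_le_mul_of_nonneg_left (abs_mul_le_min_sq_add hs0 _ _) (h0 i j)
    _ ≤ s ^ 2 * δ * (x ⬝ᵥ x) / (2 * s) + D * (s * (x ⬝ᵥ x)) := by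
        simp only [Finset.sum_add_distrib, ← Finset.sum_div]
        gcongr
    _ = _ := by field_simp

end Comparison

section SpectralComparison

lemma exists_gridVec_close {h R : ℝ} (hh : 0 < h) {M : ℕ} (hM : R / h + 1 ≤ M) {y : Fin n → ℝ}
    (hy : ∀ i, |y i| * Real.sqrt n ≤ R) :
    ∃ k : Fin n → Finset.Icc (-(M : ℤ)) M,
      (y - gridVec h fun i => k i) ⬝ᵥ (y - gridVec h fun i => k i) ≤ h ^ 2 := by
  have hmem (i : Fin n) : ⌊y i * Real.sqrt n / h⌋ ∈ Finset.Icc (-(M : ℤ)) M := by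
    have hle : |y i * Real.sqrt n / h| ≤ R / h := by
      rw [abs_div, abs_mul, abs_of_pos hh, abs_of_nonneg (Real.sqrt_nonneg n)]
      gcongr
      exact hy i
    obtain ⟨hlow, hup⟩ := abs_le.1 hle
    rw [Finset.mem_Icc, Int.le_floor, Int.floor_le_iff]
    push_cast
    constructor <;> linarith
  refine ⟨fun i => ⟨_, hmem i⟩, ?_⟩
  have hentry (i : Fin n) :
      (y i - h * ⌊y i * Real.sqrt n / h⌋ / Real.sqrt n) ^ 2 ≤ h ^ 2 / n := by
    have hn : (0 : ℝ) < n := Nat.cast_pos.2 i.pos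
    rw [show y i - h * ⌊y i * Real.sqrt n / h⌋ / Real.sqrt n =
        Int.fract (y i * Real.sqrt n / h) * (h / Real.sqrt n) by rw [Int.fract]; field_simp,
      mul_pow, div_pow, Real.sq_sqrt hn.le]
    exact mul_le_of_le_one_left (by positivity)
      (pow_le_one₀ (Int.fract_nonneg _) (Int.fract_lt_one _).le)
  rw [dotProduct_self_eq_sum_sq]
  refine (Finset.sum_le_sum fun i _ => hentry i).trans ?_
  rw [Finset.sum_const, Finset.card_univ, Fintype.card_fin, nsmul_eq_mul]
  rw [mul_div_left_comm]
  exact mul_le_of_le_one_right (sq_nonneg h) (div_self_le_one _)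

variable {P : Fin n → Fin n → ℝ} {d : ℝ} {G : SimpleGraph (Fin n)} [NeZero n]

lemma FlatBound.dotProduct_adjM_mulVec_le {h ε R : ℝ} {M : ℕ} (hflat : FlatBound P d h M ε G)
    (hP : IsEdgeProb P) (hd : ∀ i j, offP P i j ≤ d / n) (hdeg : ∀ v, ∑ w, adjM G v w ≤ 3 * d)
    (hh : 0 < h) (hh1 : h ≤ 1) (hM : R / h + 1 ≤ M) {y : Fin n → ℝ}
    (hyR : ∀ i, |y i| * Real.sqrt n ≤ R) (hy : y ⬝ᵥ y ≤ 1) :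
    y ⬝ᵥ adjM G *ᵥ y ≤ y ⬝ᵥ offP P *ᵥ y + (ε + 24 * h) * d := by
  have hd0 := nonneg_of_offP_le hd
  obtain ⟨k, hk⟩ := exists_gridVec_close hh hM hyR
  have hz : gridVec h (fun i => k i) ⬝ᵥ gridVec h (fun i => k i) ≤ 4 := by
    set z := gridVec h fun i => (k i : ℤ)
    have hsplit : 2 * (y ⬝ᵥ y) + 2 * ((y - z) ⬝ᵥ (y - z)) - z ⬝ᵥ z =
        (y + (y - z)) ⬝ᵥ (y + (y - z)) := by
      simp only [add_dotProduct, sub_dotProduct, dotProduct_add, dotProduct_sub,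
        dotProduct_comm z y]
      ring
    nlinarith [dotProduct_self_nonneg (y + (y - z))]
  have hadj := abs_dotProduct_mulVec_sub_le_of_close (adjM_nonneg G) (adjM_comm G) (by positivity)
    hdeg hh hy hz hk
  have hoff := abs_dotProduct_mulVec_sub_le_of_close hP.offP_nonneg (offP_comm hP.symm)
    (by positivity) (fun v => (sum_offP_le hd v).trans (by linarith : d ≤ 3 * d)) hh hy hz hk
  linarith [hflat k hz, (abs_le.1 hadj).2, (abs_le.1 hoff).1]

lemma SparseSmallSets.dotProduct_adjM_mulVec_le {h ε ε₁ s K R : ℝ} {M : ℕ}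
    (hsparse : SparseSmallSets d K (s ^ 2) G) (hflat : FlatBound P d h M ε G)
    (hP : IsEdgeProb P) (hd : ∀ i j, offP P i j ≤ d / n) (hdeg : ∀ v, ∑ w, adjM G v w ≤ 3 * d)
    (hh : 0 < h) (hh1 : h ≤ 1) (hM : R / h + 1 ≤ M) (hε₁ : 0 < ε₁) (hε₁1 : ε₁ ≤ 1) (hs : 0 < s)
    (hK : 0 < K) (hR : 0 < R) (hKR : K ≤ (ε₁ * R) ^ 2) {x : Fin n → ℝ} (hx : x ⬝ᵥ x = 1) :
    x ⬝ᵥ adjM G *ᵥ x ≤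
      x ⬝ᵥ offP P *ᵥ x + (ε + 24 * h + 12 * ε₁ + 7 / 2 * s + 1 / K) * d := by
  have hn : (0 : ℝ) < n := Nat.cast_pos.2 (NeZero.pos n)
  have hd0 := nonneg_of_offP_le hd
  have hT : 0 < R / Real.sqrt n := by positivity
  set T := R / Real.sqrt n with hTdef
  have hsmall := hflat.dotProduct_adjM_mulVec_le hP hd hdeg hh hh1 hM
    (y := fun i => trunc T (x i))
    (fun i => (le_div_iff₀ (by positivity)).1 (abs_trunc_le hT.le (x i)))
    (by
      rw [← hx, dotProduct_self_eq_sum_sq, dotProduct_self_eq_sum_sq]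
      exact Finset.sum_le_sum fun i _ => trunc_sq_le T (x i))
  set U : Finset (Fin n) := {i | ε₁ * T ≤ |x i|}
  have hU : K * U.card ≤ n := by
    have hcard := card_filter_le_abs_mul_sq_le (t := ε₁ * T) (by positivity) x
    change (U.card : ℝ) * _ ≤ _ at hcard
    rw [hx, hTdef, ← mul_div_assoc, div_pow, Real.sq_sqrt hn.le, ← mul_div_assoc,
      div_le_one hn] at hcard
    calc K * U.card ≤ (ε₁ * R) ^ 2 * U.card := by gcongr
      _ ≤ n := by rwa [mul_comm]
  have hadj := abs_dotProduct_mulVec_sub_trunc_le (adjM_nonneg G) (adjM_comm G) hdeg hT hε₁ hε₁1 x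
  have hoff := abs_dotProduct_mulVec_sub_trunc_le hP.offP_nonneg (offP_comm hP.symm)
    (fun v => (sum_offP_le hd v).trans (by linarith : d ≤ 3 * d)) hT hε₁ hε₁1 x
  have hadjU := sum_sum_mul_abs_le_of_sparse (adjM_nonneg G) (adjM_comm G) hdeg hs hd0
    (fun T hTU => hsparse T (le_trans (by gcongr) hU)) x
  have hoffU : ∑ i ∈ U, ∑ j ∈ U, offP P i j * |x i * x j| ≤ 1 / K * d :=
    (sum_sum_mul_abs_le_of_entry_le (by positivity) hd U x).trans (by
      rw [hx, mul_one, div_mul_eq_mul_div, one_div_mul_eq_div, div_le_div_iff₀ hn hK, mul_assoc,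
        mul_comm _ K]
      gcongr)
  rw [hx] at hadj hoff hadjU
  linarith [(abs_le.1 hadj).2, (abs_le.1 hoff).1]

lemma natCast_mul_exp_neg_le_one_div {t : ℝ} (ht : 2 * Real.log n ≤ t) :
    n * Real.exp (-t) ≤ 1 / n := by
  have hn : (0 : ℝ) < n := Nat.cast_pos.2 (NeZero.pos n)
  calc n * Real.exp (-t) ≤ n * Real.exp (-(Real.log n + Real.log n)) := by gcongr; linarith
    _ = 1 / n := by rw [neg_add, Real.exp_add, Real.exp_neg, Real.exp_log hn]; field_simp

variable {μ : PMF (SimpleGraph (Fin n))}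

lemma IsEdgeProduct.measureReal_not_flatBound_le_one_div (hμ : IsEdgeProduct P μ)
    (hP : IsEdgeProb P) (hd : ∀ i j, offP P i j ≤ d / n) {h ε b : ℝ} {M : ℕ} (hb : 0 < b)
    (hbε : b ≤ ε / 32) (hbM : b * (h * M) ^ 2 ≤ 1)
    (hM : 4 * (Real.log (2 * M + 1) + 1) ≤ b * ε * d) :
    μ.toMeasure.real {G | ¬ FlatBound P d h M ε G} ≤ 1 / n :=
  calc _ ≤ (2 * M + 1) ^ n * Real.exp (-(b * ε * n * d / 4)) :=
        hμ.measureReal_not_flatBound_le hP hd hb hbε hbM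
    _ = Real.exp (-(n * (b * ε * d / 4 - Real.log (2 * M + 1)))) := by
        rw [← Real.exp_log (by positivity : (0 : ℝ) < 2 * M + 1), ← Real.exp_nat_mul,
          ← Real.exp_add, Real.exp_log (by positivity)]
        ring_nf
    _ ≤ Real.exp (-(n * 1)) := by gcongr; linarith
    _ ≤ 1 / n := by
        have hn : (0 : ℝ) < n := Nat.cast_pos.2 (NeZero.pos n)
        rw [mul_one, Real.exp_neg, one_div]
        gcongr
        linarith [Real.add_one_le_exp (n : ℝ)]

lemma IsEdgeProduct.measureReal_not_sparseSmallSets_le_two_div (hμ : IsEdgeProduct P μ)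
    (hP : IsEdgeProb P) (hd : ∀ i j, offP P i j ≤ d / n) (hlog : Real.log n ≤ d) {K ε : ℝ}
    (hε : 0 < ε) (hK : Real.exp (9 / ε) ≤ K) :
    μ.toMeasure.real {G | ¬ SparseSmallSets d K ε G} ≤ 2 / n := by
  have hn : (1 : ℝ) ≤ n := Nat.one_le_cast.2 (NeZero.pos n)
  have hsmall := natCast_mul_exp_neg_le_one_div (n := n) (t := 4 * d)
    (by linarith [Real.log_nonneg hn])
  refine (hμ.measureReal_not_sparseSmallSets_le hP hd hε hK).trans ?_
  set t := n * Real.exp (-(4 * d))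
  have ht0 : 0 ≤ t := by positivity
  have ht1 : t ≤ 1 := hsmall.trans ((div_le_one (by positivity)).2 hn)
  have hexp := Real.abs_exp_sub_one_le (x := t) (by rwa [abs_of_nonneg ht0])
  calc Real.exp t - 1 ≤ 2 * t := by simpa [abs_of_nonneg ht0] using (le_abs_self _).trans hexp
    _ ≤ 2 * (1 / n) := by gcongr
    _ = 2 / n := by ring

lemma exists_forall_measureReal_not_dotProduct_adjM_le {τ : ℝ} (hτ : 0 < τ) (hτ1 : τ ≤ 1) :
    ∃ D : ℝ, ∀ (n : ℕ) [NeZero n] (P : Fin n → Fin n → ℝ) (μ : PMF (SimpleGraph (Fin n))) (d : ℝ),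
      IsEdgeProduct P μ → IsEdgeProb P → (∀ i j, offP P i j ≤ d / n) → D ≤ d → Real.log n ≤ d →
      μ.toMeasure.real {G | ¬ ((∀ v, ∑ w, adjM G v w ≤ 3 * d) → ∀ x : Fin n → ℝ,
        x ⬝ᵥ adjM G *ᵥ x ≤ x ⬝ᵥ offP P *ᵥ x + τ * d * (x ⬝ᵥ x))} ≤ 3 / n := by
  obtain ⟨K, hK⟩ : ∃ K, K = Real.exp (9 / (τ / 28) ^ 2) := ⟨_, rfl⟩
  have hK9 : 9 / (τ / 28) ^ 2 ≤ K := hK ▸ by linarith [Real.add_one_le_exp (9 / (τ / 28) ^ 2)]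
  have hK8 : 8 / τ ≤ K := hK9.trans' (by rw [div_le_div_iff₀ hτ (by positivity)]; nlinarith)
  have hK1 : 1 ≤ K := hK8.trans' (by rw [le_div_iff₀ hτ]; linarith)
  have hKτ : 1 / K ≤ τ / 8 := by
    rw [div_le_iff₀ (by positivity), ← div_le_iff₀' (by positivity), one_div_div]
    exact hK8
  obtain ⟨M, hM⟩ := exists_nat_ge (K / (τ / 64) / (τ / 128) + 1)
  have hM0 : (0 : ℝ) < M := hM.trans_lt' (by positivity)
  obtain ⟨b, hb⟩ : ∃ b, b = min (τ / 8 / 32) ((1 / (τ / 128 * M)) ^ 2) := ⟨_, rfl⟩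
  have hb0 : 0 < b := hb ▸ lt_min (by positivity) (by positivity)
  have hbM : b * (τ / 128 * M) ^ 2 ≤ 1 := by
    rw [← le_div_iff₀ (by positivity), ← _root_.one_div_pow]
    exact hb ▸ min_le_right _ _
  refine ⟨4 * (Real.log (2 * M + 1) + 1) / (b * (τ / 8)), fun n _ P μ d hμ hP hd hD hlog => ?_⟩
  rw [div_le_iff₀' (by positivity)] at hD
  have hflat := hμ.measureReal_not_flatBound_le_one_div hP hd hb0 (hb ▸ min_le_left _ _) hbM hD
  have hsparse := hμ.measureReal_not_sparseSmallSets_le_two_div hP hd hlog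
    (by positivity : 0 < (τ / 28) ^ 2) hK.ge
  calc _ ≤ μ.toMeasure.real ({G | ¬ FlatBound P d (τ / 128) M (τ / 8) G} ∪
          {G | ¬ SparseSmallSets d K ((τ / 28) ^ 2) G}) := ?_
    _ ≤ 1 / n + 2 / n := (measureReal_union_le _ _).trans (add_le_add hflat hsparse)
    _ = 3 / n := by ring
  refine measureReal_mono fun G hG => by_contra fun hgood => hG fun hdeg =>
    dotProduct_mulVec_le_of_unit fun x hx => ?_
  simp only [Set.mem_union, Set.mem_ofPred_eq, not_or, not_not] at hgood
  refine (hgood.2.dotProduct_adjM_mulVec_le (ε₁ := τ / 64) hgood.1 hP hd hdeg (by positivity)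
    (by linarith) hM (by positivity) (by linarith) (by positivity) (by positivity)
    (by positivity) ?_ hx).trans ?_
  · rw [mul_div_cancel₀ _ (by positivity)]
    exact le_self_pow₀ hK1 two_ne_zero
  -- The five error terms are `τ / 8`, `3 τ / 16`, `3 τ / 16`, `τ / 8` and at most `τ / 8`.
  · have hd0 := nonneg_of_offP_le hd
    gcongr
    linarith

end SpectralComparison

section Laplacian

lemma dotProduct_wlap_mulVec (W : Matrix (Fin n) (Fin n) ℝ) (x : Fin n → ℝ) :
    x ⬝ᵥ wlap W *ᵥ x = ∑ i, (∑ j, W i j) * x i ^ 2 - x ⬝ᵥ W *ᵥ x := by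
  rw [wlap, sub_mulVec, dotProduct_sub]
  congr 1
  simp only [dotProduct, mulVec_diagonal]
  exact Finset.sum_congr rfl fun i _ => by ring

lemma dotProduct_wlap_mulVec_eq_half_sum {W : Matrix (Fin n) (Fin n) ℝ}
    (hW : ∀ i j, W i j = W j i) (x : Fin n → ℝ) :
    x ⬝ᵥ wlap W *ᵥ x = 1 / 2 * ∑ i, ∑ j, W i j * (x i - x j) ^ 2 := by
  have hcol : ∑ i, ∑ j, W i j * x j ^ 2 = ∑ i, ∑ j, W i j * x i ^ 2 := by
    rw [Finset.sum_comm]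
    simp only [hW]
  have hexpand : ∑ i, ∑ j, W i j * (x i - x j) ^ 2 = ∑ i, ∑ j, W i j * x i ^ 2 +
      ∑ i, ∑ j, W i j * x j ^ 2 - 2 * ∑ i, ∑ j, W i j * (x i * x j) := by
    simp only [Finset.mul_sum, ← Finset.sum_add_distrib, ← Finset.sum_sub_distrib]
    exact Finset.sum_congr rfl fun i _ => Finset.sum_congr rfl fun j _ => by ring
  rw [hexpand, hcol, dotProduct_wlap_mulVec, dotProduct_mulVec_eq_sum]
  simp only [Finset.sum_mul]
  ring

lemma isHermitian_lap (G : SimpleGraph (Fin n)) : (lap G).IsHermitian := by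
  refine (isHermitian_diagonal _).sub ?_
  ext i j
  rw [conjTranspose_apply, star_trivial, adjM_comm]

lemma lap_mulVec_apply (G : SimpleGraph (Fin n)) (x : Fin n → ℝ) (w : Fin n) :
    (lap G *ᵥ x) w = ∑ j, adjM G w j * (x w - x j) := by
  simp only [lap, wlap, sub_mulVec, Pi.sub_apply, mulVec_diagonal, mul_sub,
    Finset.sum_sub_distrib, ← Finset.sum_mul]
  rfl

end Laplacian

section Communities

/-- The `±1` indicator of the two communities. -/
def side (n : ℕ) (v : Fin n) : ℝ := if inP1 n v then 1 else -1

lemma side_mul_self (v : Fin n) : side n v * side n v = 1 := by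
  unfold side
  split_ifs <;> norm_num

lemma side_mul_side (v w : Fin n) : side n v * side n w = if sameSide n v w then 1 else -1 := by
  unfold side sameSide
  split_ifs <;> simp_all

lemma sum_side (hn : Even n) : ∑ v, side n v = 0 := by
  obtain ⟨k, rfl⟩ := hn
  simp [side, inP1, ← two_mul, Fin.sum_univ_add]

/-- The matrix with entries `p` inside the communities and `q` across them. -/
def blockMatrix (n : ℕ) (p q : ℝ) : Matrix (Fin n) (Fin n) ℝ :=
  Matrix.of fun v w => (p + q) / 2 + (p - q) / 2 * (side n v * side n w)

lemma blockMatrix_comm (p q : ℝ) (v w : Fin n) : blockMatrix n p q v w = blockMatrix n p q w v := by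
  simp only [blockMatrix, of_apply, mul_comm (side n v)]

lemma blockMatrix_apply (p q : ℝ) (v w : Fin n) :
    blockMatrix n p q v w = if sameSide n v w then p else q := by
  rw [blockMatrix, of_apply, side_mul_side]
  split_ifs <;> ring

lemma sum_blockMatrix (hn : Even n) (p q : ℝ) (v : Fin n) :
    ∑ w, blockMatrix n p q v w = n * (p + q) / 2 := by
  simp only [blockMatrix, of_apply, Finset.sum_add_distrib, ← Finset.mul_sum, sum_side hn]
  simp
  ring

lemma dotProduct_blockMatrix_mulVec_eq_zero (p q : ℝ) {x : Fin n → ℝ} (hx : ∑ i, x i = 0)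
    (hxs : ∑ i, side n i * x i = 0) : x ⬝ᵥ blockMatrix n p q *ᵥ x = 0 :=
  calc _ = (p + q) / 2 * ((∑ i, x i) * ∑ j, x j) +
        (p - q) / 2 * ((∑ i, side n i * x i) * ∑ j, side n j * x j) := by
        rw [dotProduct_mulVec_eq_sum, Finset.sum_mul_sum, Finset.sum_mul_sum]
        simp only [Finset.mul_sum, ← Finset.sum_add_distrib]
        exact Finset.sum_congr rfl fun i _ => Finset.sum_congr rfl fun j _ => by
          rw [blockMatrix, of_apply]
          ring
    _ = 0 := by rw [hx, hxs]; ring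

variable {p pbar q : ℝ} {P : Fin n → Fin n → ℝ} {G : SimpleGraph (Fin n)}

lemma NSSBMprob.blockMatrix_le_offP (hP : NSSBMprob n p pbar q P) {v w : Fin n} (hvw : v ≠ w) :
    blockMatrix n p q v w ≤ offP P v w := by
  rw [blockMatrix_apply, offP, of_apply, if_neg hvw]
  split_ifs with h
  · exact (hP.2.1 v w hvw h).1
  · exact (hP.2.2 v w h).ge

lemma NSSBMprob.le_sum_offP (hP : NSSBMprob n p pbar q P) (hn : Even n) (v : Fin n) :
    n * (p + q) / 2 - p ≤ ∑ w, offP P v w := by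
  rw [← sum_blockMatrix hn p q v, sub_le_iff_le_add, ← Finset.sum_erase_add _ _ (Finset.mem_univ v),
    ← Finset.sum_erase_add _ _ (Finset.mem_univ v), offP_self, add_zero, blockMatrix_apply,
    if_pos (show sameSide n v v from Iff.rfl)]
  gcongr with w hw
  exact hP.blockMatrix_le_offP (Finset.ne_of_mem_erase hw).symm

lemma NSSBMprob.le_dotProduct_wlap_offP_mulVec (hP : NSSBMprob n p pbar q P) (hn : Even n)
    {x : Fin n → ℝ} (hx : ∑ i, x i = 0) (hxs : ∑ i, side n i * x i = 0) :
    n * (p + q) / 2 * (x ⬝ᵥ x) ≤ x ⬝ᵥ wlap (offP P) *ᵥ x :=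
  calc _ = x ⬝ᵥ wlap (blockMatrix n p q) *ᵥ x := by
        rw [dotProduct_wlap_mulVec, dotProduct_blockMatrix_mulVec_eq_zero p q hx hxs, sub_zero,
          dotProduct_self_eq_sum_sq, Finset.mul_sum]
        simp only [sum_blockMatrix hn]
    _ ≤ _ := by
        rw [dotProduct_wlap_mulVec_eq_half_sum (blockMatrix_comm p q),
          dotProduct_wlap_mulVec_eq_half_sum (offP_comm hP.1)]
        gcongr 1 / 2 * ∑ i, ∑ j, ?_ with i _ j _
        rcases eq_or_ne i j with rfl | hij
        · simp
        · exact mul_le_mul_of_nonneg_right (hP.blockMatrix_le_offP hij) (sq_nonneg _)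

lemma NSSBMprob.le_dotProduct_lap_mulVec (hP : NSSBMprob n p pbar q P) (hn : Even n) {η τ : ℝ}
    (hdeg : ∀ v, ∑ w, offP P v w - η ≤ ∑ w, adjM G v w)
    (hspec : ∀ x : Fin n → ℝ, x ⬝ᵥ adjM G *ᵥ x ≤ x ⬝ᵥ offP P *ᵥ x + τ * (x ⬝ᵥ x))
    {x : Fin n → ℝ} (hx : ∑ i, x i = 0) (hxs : ∑ i, side n i * x i = 0) :
    (n * (p + q) / 2 - (η + τ)) * (x ⬝ᵥ x) ≤ x ⬝ᵥ lap G *ᵥ x := by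
  have hexp := hP.le_dotProduct_wlap_offP_mulVec hn hx hxs
  rw [dotProduct_wlap_mulVec] at hexp
  rw [lap, dotProduct_wlap_mulVec]
  have hdiag : ∑ i, (∑ j, offP P i j) * x i ^ 2 - η * (x ⬝ᵥ x) ≤
      ∑ i, (∑ j, adjM G i j) * x i ^ 2 := by
    rw [dotProduct_self_eq_sum_sq, Finset.mul_sum, ← Finset.sum_sub_distrib]
    simp only [← sub_mul]
    gcongr with i
    exact hdeg i
  linarith [hspec x]

lemma NSSBMprob.sum_sum_offP_cross (hP : NSSBMprob n p pbar q P) (hn : Even n) :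
    ∑ i, ∑ j, (if ¬ sameSide n i j then offP P i j else 0) = q * n ^ 2 / 2 := by
  have hentry (i j : Fin n) : (if ¬ sameSide n i j then offP P i j else 0) =
      blockMatrix n 0 q i j := by
    rw [blockMatrix_apply, ite_not]
    split_ifs with h
    · rfl
    · have hij : i ≠ j := by rintro rfl; exact h Iff.rfl
      rw [offP, of_apply, if_neg hij, hP.2.2 i j h]
  simp only [hentry, sum_blockMatrix hn]
  simp
  ring

end Communities

section MinMax

variable {ι : Type*} [Fintype ι] {M : Matrix ι ι ℝ}

lemma dotProduct_mulVec_comm (hM : M.IsHermitian) (x y : ι → ℝ) :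
    x ⬝ᵥ M *ᵥ y = y ⬝ᵥ M *ᵥ x := by
  have htranspose : Mᵀ = M := by simpa using hM.eq
  rw [dotProduct_mulVec, ← mulVec_transpose, htranspose, dotProduct_comm]

variable [DecidableEq ι]

lemma dotProduct_eq_sum_eigenvectorBasis (hM : M.IsHermitian) (x y : ι → ℝ) :
    x ⬝ᵥ y = ∑ i, ((hM.eigenvectorBasis i).ofLp ⬝ᵥ x) * ((hM.eigenvectorBasis i).ofLp ⬝ᵥ y) := by
  have h := hM.eigenvectorBasis.sum_inner_mul_inner (WithLp.toLp 2 x) (WithLp.toLp 2 y)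
  simp only [EuclideanSpace.inner_eq_star_dotProduct, star_trivial] at h
  rw [dotProduct_comm, ← h]
  exact Finset.sum_congr rfl fun i _ => by rw [dotProduct_comm y]

lemma dotProduct_mulVec_eq_sum_eigenvalues (hM : M.IsHermitian) (x : ι → ℝ) :
    x ⬝ᵥ M *ᵥ x = ∑ i, hM.eigenvalues i * ((hM.eigenvectorBasis i).ofLp ⬝ᵥ x) ^ 2 := by
  rw [dotProduct_eq_sum_eigenvectorBasis hM]
  refine Finset.sum_congr rfl fun i _ => ?_
  rw [dotProduct_mulVec_comm hM _ x, hM.mulVec_eigenvectorBasis, dotProduct_smul, smul_eq_mul,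
    dotProduct_comm x]
  ring

lemma countP_le_le_one_of_lt_getD_sort {s : Multiset ℝ} {R : ℝ} (hs : 1 < s.card)
    (hR : R < (s.sort (· ≤ ·)).getD 1 0) : s.countP (· ≤ R) ≤ 1 := by
  have hlen : 1 < (s.sort (· ≤ ·)).length := by rwa [Multiset.length_sort]
  have hsort := s.pairwise_sort (· ≤ ·)
  rw [← s.sort_eq (· ≤ ·), Multiset.coe_countP]
  match hl : s.sort (· ≤ ·) with
  | [] => simp [hl] at hlen
  | [c] => simp [hl] at hlen
  | c :: e :: l =>
    rw [hl] at hR hsort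
    have hbig : (e :: l).countP (· ≤ R) = 0 := by
      rw [List.countP_eq_zero]
      intro r hr
      rw [decide_eq_true_iff, not_le]
      rcases List.mem_cons.1 hr with rfl | hr
      · exact hR
      · exact hR.trans_le ((List.pairwise_cons.1 (List.pairwise_cons.1 hsort).2).1 r hr)
    rw [List.countP_cons, hbig]
    split_ifs <;> simp

lemma exists_forall_ne_lt_eigenvalues {M : Matrix (Fin n) (Fin n) ℝ} (hM : M.IsHermitian)
    (hn : 1 < n) {R : ℝ} (hR : R < eig M 1) : ∃ i₀, ∀ i ≠ i₀, R < hM.eigenvalues i := by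
  have hroots : M.charpoly.roots = Finset.univ.val.map hM.eigenvalues := by
    simpa using hM.roots_charpoly_eq_eigenvalues
  have hcount := countP_le_le_one_of_lt_getD_sort (by simpa [hroots] using hn) hR
  rw [hroots, Multiset.countP_map] at hcount
  have : Nonempty (Fin n) := ⟨⟨0, by lia⟩⟩
  obtain ⟨i₀, hi₀⟩ := Finset.card_le_one_iff_subset_singleton
    (s := {i | hM.eigenvalues i ≤ R}).1 hcount
  exact ⟨i₀, fun i hi => not_le.1 fun hle => hi (by simpa using hi₀ (by simpa using hle))⟩

lemma eig_one_le_of_one_lt_finrank {M : Matrix (Fin n) (Fin n) ℝ} (hM : M.IsHermitian)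
    {W : Submodule ℝ (Fin n → ℝ)} (hW : 1 < Module.finrank ℝ W) {R : ℝ}
    (h : ∀ x ∈ W, x ⬝ᵥ M *ᵥ x ≤ R * (x ⬝ᵥ x)) : eig M 1 ≤ R := by
  by_contra! hcon
  have hn : 1 < n := hW.trans_le (by simpa using W.finrank_le)
  obtain ⟨i₀, hi₀⟩ := exists_forall_ne_lt_eigenvalues hM hn hcon
  have hker := LinearMap.ker_ne_bot_of_finrank_lt
    (f := (dotProductBilin ℝ ℝ (hM.eigenvectorBasis i₀).ofLp).domRestrict W) (by simpa using hW)
  obtain ⟨⟨x, hxW⟩, hxker, hx0⟩ := Submodule.exists_mem_ne_zero_of_ne_bot hker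
  have hort : (hM.eigenvectorBasis i₀).ofLp ⬝ᵥ x = 0 := by simpa using hxker
  have hx : 0 < x ⬝ᵥ x := (dotProduct_self_nonneg x).lt_of_ne' fun h0 =>
    hx0 (Subtype.ext (dotProduct_self_eq_zero.1 h0))
  have hself := dotProduct_eq_sum_eigenvectorBasis hM x x
  refine (h x hxW).not_gt ?_
  rw [hself] at hx
  obtain ⟨i, -, hi⟩ := Finset.exists_ne_zero_of_sum_ne_zero hx.ne'
  rw [hself, dotProduct_mulVec_eq_sum_eigenvalues hM, Finset.mul_sum]
  refine Finset.sum_lt_sum (fun j _ => ?_) ⟨i, Finset.mem_univ i, ?_⟩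
  · rcases eq_or_ne j i₀ with hj | hj
    · simp [hj, hort]
    · rw [sq]
      exact mul_le_mul_of_nonneg_right (hi₀ j hj).le (mul_self_nonneg _)
  · have hii : i ≠ i₀ := fun hii => hi (by rw [hii, hort, mul_zero])
    rw [sq]
    exact mul_lt_mul_of_pos_right (hi₀ i hii) ((mul_self_nonneg _).lt_of_ne' hi)

variable {p pbar q : ℝ} {P : Fin n → Fin n → ℝ} {G : SimpleGraph (Fin n)}

lemma sum_add_mul_side_sq (hn : Even n) (s t : ℝ) :
    ∑ v, (s + t * side n v) ^ 2 = n * (s ^ 2 + t ^ 2) :=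
  calc _ = ∑ v, (s ^ 2 + t ^ 2 + 2 * s * t * side n v) := Finset.sum_congr rfl fun v _ => by
        linear_combination t ^ 2 * side_mul_self v
    _ = _ := by
      rw [Finset.sum_add_distrib, ← Finset.mul_sum, sum_side hn]
      simp
      ring

lemma linearIndependent_one_side (hn : Even n) [NeZero n] :
    LinearIndependent ℝ ![(1 : Fin n → ℝ), side n] := by
  refine LinearIndependent.pair_iff.2 fun s t hst => ?_
  have hsum := sum_add_mul_side_sq hn s t
  have hzero (v : Fin n) : s + t * side n v = 0 := by simpa using congrFun hst v
  simp only [hzero] at hsum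
  have hsq : s ^ 2 + t ^ 2 = 0 := by simpa [NeZero.ne n] using hsum.symm
  constructor <;> nlinarith [sq_nonneg s, sq_nonneg t]

lemma dotProduct_lap_mulVec_add_mul_side (G : SimpleGraph (Fin n)) (s t : ℝ) :
    (fun v => s + t * side n v) ⬝ᵥ lap G *ᵥ (fun v => s + t * side n v) =
      2 * t ^ 2 * ∑ i, ∑ j, (if ¬ sameSide n i j then adjM G i j else 0) := by
  rw [lap, dotProduct_wlap_mulVec_eq_half_sum (adjM_comm G), Finset.mul_sum, Finset.mul_sum]
  refine Finset.sum_congr rfl fun i _ => ?_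
  rw [Finset.mul_sum, Finset.mul_sum]
  refine Finset.sum_congr rfl fun j _ => ?_
  have hsq : (s + t * side n i - (s + t * side n j)) ^ 2 =
      2 * t ^ 2 * (1 - side n i * side n j) := by
    linear_combination t ^ 2 * (side_mul_self i + side_mul_self j)
  rw [hsq, side_mul_side, ite_not]
  split_ifs <;> ring

lemma NSSBMprob.eig_lap_one_le (hP : NSSBMprob n p pbar q P) (hn : Even n) [NeZero n] (hq : 0 ≤ q)
    {η : ℝ} (hη : 0 ≤ η) (hcut : ∑ i, ∑ j, (if ¬ sameSide n i j then adjM G i j else 0) ≤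
      ∑ i, ∑ j, (if ¬ sameSide n i j then offP P i j else 0) + η * n) :
    eig (lap G) 1 ≤ n * q + 2 * η := by
  have hrank := finrank_span_eq_card (linearIndependent_one_side hn)
  rw [range_cons_cons_empty, Fintype.card_fin] at hrank
  refine eig_one_le_of_one_lt_finrank (isHermitian_lap G) (by rw [hrank]; exact one_lt_two)
    fun x hx => ?_
  obtain ⟨s, t, rfl⟩ := Submodule.mem_span_pair.1 hx
  have hfun : s • (1 : Fin n → ℝ) + t • side n = fun v => s + t * side n v := by
    ext v
    simp
  rw [hP.sum_sum_offP_cross hn] at hcut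
  have hR : 0 ≤ (n * q + 2 * η) * (n * s ^ 2) := by positivity
  rw [hfun, dotProduct_lap_mulVec_add_mul_side, dotProduct_self_eq_sum_sq, sum_add_mul_side_sq hn]
  linarith [mul_le_mul_of_nonneg_left hcut (by positivity : 0 ≤ 2 * t ^ 2)]

end MinMax

section RayleighMin

variable {ι : Type*} [Fintype ι] {M : Matrix ι ι ℝ} {V : Submodule ℝ (ι → ℝ)} {φ : ι → ℝ}

lemma abs_dotProduct_le_sqrt_mul_sqrt (x y : ι → ℝ) :
    |x ⬝ᵥ y| ≤ Real.sqrt (x ⬝ᵥ x) * Real.sqrt (y ⬝ᵥ y) := by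
  rw [← Real.sqrt_mul (dotProduct_self_nonneg x), dotProduct_self_eq_sum_sq x,
    dotProduct_self_eq_sum_sq y]
  exact Real.abs_le_sqrt (Finset.sum_mul_sq_le_sq_mul_sq _ _ _)

lemma abs_le_sqrt_dotProduct_self (x : ι → ℝ) (i : ι) : |x i| ≤ Real.sqrt (x ⬝ᵥ x) := by
  rw [dotProduct_self_eq_sum_sq]
  exact Real.abs_le_sqrt
    (Finset.single_le_sum (f := fun i => x i ^ 2) (fun j _ => sq_nonneg _) (Finset.mem_univ i))

/-- `φ` minimises the quadratic form of `M` among the unit vectors of `V`, that is, it realises the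
minimum of the Rayleigh quotient of `M` on `V`. The minimality is stated without division. -/
structure IsRayleighMin (M : Matrix ι ι ℝ) (V : Submodule ℝ (ι → ℝ)) (φ : ι → ℝ) : Prop where
  mem : φ ∈ V
  dotProduct_self : φ ⬝ᵥ φ = 1
  le : ∀ x ∈ V, (φ ⬝ᵥ M *ᵥ φ) * (x ⬝ᵥ x) ≤ x ⬝ᵥ M *ᵥ x

lemma exists_isRayleighMin (M : Matrix ι ι ℝ) (hV : V ≠ ⊥) : ∃ φ, IsRayleighMin M V φ := by
  have hnormalize {x : ι → ℝ} (hxV : x ∈ V) (hx : x ≠ 0) :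
      (Real.sqrt (x ⬝ᵥ x))⁻¹ • x ∈ {x | x ∈ V ∧ x ⬝ᵥ x = 1} := by
    have hpos : 0 < x ⬝ᵥ x := (dotProduct_self_nonneg x).lt_of_ne' (by simpa using hx)
    refine ⟨V.smul_mem _ hxV, ?_⟩
    rw [smul_dotProduct, dotProduct_smul, smul_smul, ← mul_inv, Real.mul_self_sqrt hpos.le,
      smul_eq_mul, inv_mul_cancel₀ hpos.ne']
  obtain ⟨x₀, hx₀V, hx₀⟩ := V.exists_mem_ne_zero_of_ne_bot hV
  have hcompact : IsCompact {x | x ∈ V ∧ x ⬝ᵥ x = 1} := by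
    refine Metric.isCompact_of_isClosed_isBounded (V.closed_of_finiteDimensional.inter
      (isClosed_eq (by fun_prop) continuous_const))
      ((Metric.isBounded_closedBall (x := 0) (r := 1)).subset fun x hx => ?_)
    rw [mem_closedBall_zero_iff, pi_norm_le_iff_of_nonneg zero_le_one]
    intro i
    simpa [hx.2] using abs_le_sqrt_dotProduct_self x i
  obtain ⟨φ, hφ, hmin⟩ := hcompact.exists_isMinOn ⟨_, hnormalize hx₀V hx₀⟩
    (f := fun x => x ⬝ᵥ M *ᵥ x) (by fun_prop)
  refine ⟨φ, hφ.1, hφ.2, fun x hxV => ?_⟩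
  rcases eq_or_ne x 0 with rfl | hx
  · simp
  have hpos : 0 < x ⬝ᵥ x := (dotProduct_self_nonneg x).lt_of_ne' (by simpa using hx)
  have hle := isMinOn_iff.1 hmin _ (hnormalize hxV hx)
  rwa [mulVec_smul, smul_dotProduct, dotProduct_smul, smul_smul, ← mul_inv,
    Real.mul_self_sqrt hpos.le, smul_eq_mul, inv_mul_eq_div, le_div_iff₀ hpos] at hle

lemma dotProduct_mulVec_add_smul (hM : M.IsHermitian) (x y : ι → ℝ) (t : ℝ) :
    (x + t • y) ⬝ᵥ M *ᵥ (x + t • y) =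
      x ⬝ᵥ M *ᵥ x + 2 * t * (x ⬝ᵥ M *ᵥ y) + t ^ 2 * (y ⬝ᵥ M *ᵥ y) := by
  simp only [mulVec_add, mulVec_smul, add_dotProduct, dotProduct_add, smul_dotProduct,
    dotProduct_smul, smul_eq_mul, dotProduct_mulVec_comm hM y x]
  ring

lemma dotProduct_self_add_smul (x y : ι → ℝ) (t : ℝ) :
    (x + t • y) ⬝ᵥ (x + t • y) = x ⬝ᵥ x + 2 * t * (x ⬝ᵥ y) + t ^ 2 * (y ⬝ᵥ y) := by
  simpa using dotProduct_mulVec_add_smul (M := 1) isHermitian_one x y t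

lemma IsRayleighMin.dotProduct_mulVec_eq_zero (hφ : IsRayleighMin M V φ) (hM : M.IsHermitian)
    {y : ι → ℝ} (hy : y ∈ V) (hφy : φ ⬝ᵥ y = 0) : φ ⬝ᵥ M *ᵥ y = 0 := by
  have hdiscrim : discrim (y ⬝ᵥ M *ᵥ y - (φ ⬝ᵥ M *ᵥ φ) * (y ⬝ᵥ y)) (2 * (φ ⬝ᵥ M *ᵥ y)) 0 ≤ 0 :=
    discrim_le_zero fun t => by
      have hle := hφ.le _ (V.add_mem hφ.mem (V.smul_mem t hy))
      rw [dotProduct_mulVec_add_smul hM, dotProduct_self_add_smul, hφ.dotProduct_self, hφy] at hle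
      linarith
  rw [discrim, mul_zero, sub_zero] at hdiscrim
  simpa using hdiscrim.antisymm (sq_nonneg _)

lemma IsRayleighMin.mul_dotProduct_self_le (hφ : IsRayleighMin M V φ) (hM : M.IsHermitian)
    {σ : ι → ℝ} {γ : ℝ} (hγ : ∀ x ∈ V, σ ⬝ᵥ x = 0 → γ * (x ⬝ᵥ x) ≤ x ⬝ᵥ M *ᵥ x)
    {x : ι → ℝ} (hx : x ∈ V) (hφx : φ ⬝ᵥ x = 0) : γ * (x ⬝ᵥ x) ≤ x ⬝ᵥ M *ᵥ x := by
  by_cases hσ : σ ⬝ᵥ x = 0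
  · exact hγ x hx hσ
  -- The combination `a x - b φ` is orthogonal to `σ`.
  set a := σ ⬝ᵥ φ with ha
  set b := σ ⬝ᵥ x with hb
  have hcomb := hγ _ (V.add_mem (V.smul_mem a hx) (V.smul_mem (-b) hφ.mem)) (by
    simp only [dotProduct_add, dotProduct_smul, smul_eq_mul, ← ha, ← hb]
    ring)
  simp only [dotProduct_mulVec_add_smul hM, dotProduct_self_add_smul, mulVec_smul, smul_dotProduct,
    dotProduct_smul, dotProduct_mulVec_comm hM x φ, dotProduct_comm x φ, hφx,
    hφ.dotProduct_mulVec_eq_zero hM hx hφx, hφ.dotProduct_self, smul_eq_mul] at hcomb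
  have hxx := dotProduct_self_nonneg x
  have hmin := mul_le_mul_of_nonneg_left (hφ.le x hx) (sq_nonneg b)
  have hcomb' := mul_le_mul_of_nonneg_right hcomb hxx
  refine le_of_mul_le_mul_left (a := a ^ 2 * (x ⬝ᵥ x) + b ^ 2) ?_ (by positivity)
  linarith

lemma mul_sqrt_dotProduct_self_le {r f : ι → ℝ} {g : ℝ} (h : g * (r ⬝ᵥ r) ≤ r ⬝ᵥ f) :
    g * Real.sqrt (r ⬝ᵥ r) ≤ Real.sqrt (f ⬝ᵥ f) := by
  rcases (Real.sqrt_nonneg (r ⬝ᵥ r)).eq_or_lt with hzero | hpos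
  · rw [← hzero, mul_zero]
    exact Real.sqrt_nonneg _
  · refine le_of_mul_le_mul_left ?_ hpos
    rw [mul_left_comm, Real.mul_self_sqrt (dotProduct_self_nonneg r)]
    exact h.trans ((le_abs_self _).trans (abs_dotProduct_le_sqrt_mul_sqrt r f))

/-- The component of `y` orthogonal to the unit vector `φ`. -/
def orthPart (φ y : ι → ℝ) : ι → ℝ := y - (φ ⬝ᵥ y) • φ

lemma dotProduct_orthPart (hφ : φ ⬝ᵥ φ = 1) (y : ι → ℝ) : φ ⬝ᵥ orthPart φ y = 0 := by
  rw [orthPart, dotProduct_sub, dotProduct_smul, hφ, smul_eq_mul, mul_one, sub_self]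

/-- A Davis–Kahan estimate: `f` is the defect of `y` in the eigenvector equation for `c`. -/
lemma IsRayleighMin.mul_sqrt_orthPart_le (hφ : IsRayleighMin M V φ) (hM : M.IsHermitian)
    {c g : ℝ} (hgap : ∀ x ∈ V, φ ⬝ᵥ x = 0 → (c + g) * (x ⬝ᵥ x) ≤ x ⬝ᵥ M *ᵥ x)
    {y f : ι → ℝ} (hy : y ∈ V) (heig : ∀ r ∈ V, r ⬝ᵥ M *ᵥ y = c * (r ⬝ᵥ y) + r ⬝ᵥ f) :
    g * Real.sqrt (orthPart φ y ⬝ᵥ orthPart φ y) ≤ Real.sqrt (f ⬝ᵥ f) := by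
  have horth := dotProduct_orthPart hφ.dotProduct_self y
  have hmem : orthPart φ y ∈ V := V.sub_mem hy (V.smul_mem _ hφ.mem)
  set r := orthPart φ y with hr
  have hyr : y = r + (φ ⬝ᵥ y) • φ := by rw [hr, orthPart, sub_add_cancel]
  have hry : r ⬝ᵥ y = r ⬝ᵥ r := by
    rw [hyr, dotProduct_add, dotProduct_smul, dotProduct_comm r φ, horth, smul_zero, add_zero]
  have hrMy : r ⬝ᵥ M *ᵥ y = r ⬝ᵥ M *ᵥ r := by
    rw [hyr, mulVec_add, mulVec_smul, dotProduct_add, dotProduct_smul,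
      dotProduct_mulVec_comm hM r φ, hφ.dotProduct_mulVec_eq_zero hM hmem horth, smul_zero,
      add_zero]
  refine mul_sqrt_dotProduct_self_le ?_
  have hle := hgap r hmem horth
  rw [← hrMy, heig r hmem, hry] at hle
  linarith

end RayleighMin

section LeaveOneOut

variable {G : SimpleGraph (Fin n)} {v : Fin n} {u x φ : Fin n → ℝ}

lemma adjM_deleteIncidenceSet (G : SimpleGraph (Fin n)) (v i j : Fin n) :
    adjM (G.deleteIncidenceSet v) i j = if i = v ∨ j = v then 0 else adjM G i j := by
  by_cases hi : i = v <;> by_cases hj : j = v <;>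
    simp [adjM, SimpleGraph.deleteIncidenceSet_adj, hi, hj]

lemma adjM_sq (G : SimpleGraph (Fin n)) (i j : Fin n) : adjM G i j ^ 2 = adjM G i j := by
  simp [adjM, ite_pow]

lemma dotProduct_lap_mulVec_le_deleteIncidenceSet (G : SimpleGraph (Fin n)) (hx : x v = 0) :
    x ⬝ᵥ lap G *ᵥ x ≤ x ⬝ᵥ lap (G.deleteIncidenceSet v) *ᵥ x + x ⬝ᵥ x := by
  have hform : x ⬝ᵥ adjM (G.deleteIncidenceSet v) *ᵥ x = x ⬝ᵥ adjM G *ᵥ x := by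
    simp only [dotProduct_mulVec_eq_sum]
    refine Finset.sum_congr rfl fun i _ => Finset.sum_congr rfl fun j _ => ?_
    rw [adjM_deleteIncidenceSet]
    split_ifs with h
    · rcases h with rfl | rfl <;> simp [hx]
    · rfl
  have hdeg (i : Fin n) : (∑ j, adjM G i j) * x i ^ 2 ≤
      (∑ j, adjM (G.deleteIncidenceSet v) i j) * x i ^ 2 + x i ^ 2 := by
    by_cases hi : i = v
    · simp [hi, hx]
    · have hsum : ∑ j, adjM G i j = ∑ j, adjM (G.deleteIncidenceSet v) i j + adjM G i v := by
        simp only [adjM_deleteIncidenceSet, hi, false_or, Finset.sum_ite, Finset.sum_const_zero,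
          zero_add, Finset.filter_ne', Finset.sum_erase_add _ _ (Finset.mem_univ v)]
      rw [hsum, ← add_one_mul]
      gcongr
      exact adjM_le_one G i v
  rw [lap, lap, dotProduct_wlap_mulVec, dotProduct_wlap_mulVec, hform, dotProduct_self_eq_sum_sq]
  have hsum := Finset.sum_le_sum fun i (_ : i ∈ Finset.univ) => hdeg i
  rw [Finset.sum_add_distrib] at hsum
  linarith

/-- The vectors with zero sum that vanish at `v`, on which the leave-one-out eigenvector problem
for the graph without the edges at `v` is posed. -/
def zeroSumOff (v : Fin n) : Submodule ℝ (Fin n → ℝ) where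
  carrier := {x | x v = 0 ∧ ∑ i, x i = 0}
  add_mem' hx hy := by simp_all [Finset.sum_add_distrib]
  zero_mem' := by simp
  smul_mem' t x hx := by simp_all [← Finset.mul_sum]

lemma zeroSumOff_ne_bot (hn : 2 < n) (v : Fin n) : zeroSumOff v ≠ ⊥ := by
  obtain ⟨a, ha, b, hb, hab⟩ := Finset.one_lt_card.1
    (show 1 < ({v}ᶜ : Finset (Fin n)).card by rw [Finset.card_compl]; simp; lia)
  rw [Finset.mem_compl, Finset.mem_singleton] at ha hb
  refine (Submodule.ne_bot_iff _).2 ⟨Pi.single a 1 - Pi.single b 1, ⟨?_, ?_⟩, fun h => ?_⟩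
  · simp [Ne.symm ha, Ne.symm hb]
  · simp [Finset.sum_sub_distrib]
  · simpa [hab] using congrFun h a

/-- The average of `u` over the vertices other than `v`. -/
def meanOff (v : Fin n) (u : Fin n → ℝ) : ℝ := (∑ w ∈ {v}ᶜ, u w) / (n - 1)

/-- The orthogonal projection of `u` onto `zeroSumOff v`. -/
def centerOff (v : Fin n) (u : Fin n → ℝ) : Fin n → ℝ :=
  fun w => if w = v then 0 else u w - meanOff v u

lemma centerOff_self : centerOff v u v = 0 := if_pos rfl

lemma centerOff_of_ne {w : Fin n} (hw : w ≠ v) : centerOff v u w = u w - meanOff v u := if_neg hw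

lemma card_compl_singleton (v : Fin n) : (({v}ᶜ : Finset (Fin n)).card : ℝ) = n - 1 := by
  rw [Finset.card_compl, Finset.card_singleton, Fintype.card_fin, Nat.cast_pred v.pos]

lemma sum_compl_singleton_eq_mul_meanOff (hn : 1 < n) (v : Fin n) (u : Fin n → ℝ) :
    ∑ w ∈ {v}ᶜ, u w = (n - 1) * meanOff v u := by
  have : (1 : ℝ) < n := by exact_mod_cast hn
  rw [meanOff, mul_div_cancel₀ _ (by linarith)]

lemma centerOff_mem_zeroSumOff (hn : 1 < n) (v : Fin n) (u : Fin n → ℝ) :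
    centerOff v u ∈ zeroSumOff v := by
  refine ⟨centerOff_self, ?_⟩
  rw [Fintype.sum_eq_add_sum_compl v, centerOff_self, zero_add,
    Finset.sum_congr rfl fun w hw => centerOff_of_ne (by simpa using hw), Finset.sum_sub_distrib,
    sum_compl_singleton_eq_mul_meanOff hn, Finset.sum_const, nsmul_eq_mul, card_compl_singleton,
    sub_self]

lemma dotProduct_self_centerOff_add_le (hn : 1 < n) (v : Fin n) (u : Fin n → ℝ) :
    centerOff v u ⬝ᵥ centerOff v u + (n - 1) * meanOff v u ^ 2 ≤ u ⬝ᵥ u := by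
  have hpoint : ∀ w ∈ ({v}ᶜ : Finset (Fin n)), centerOff v u w ^ 2 =
      u w ^ 2 - 2 * meanOff v u * u w + meanOff v u ^ 2 := fun w hw => by
    rw [centerOff_of_ne (by simpa using hw)]
    ring
  have hcenter : centerOff v u ⬝ᵥ centerOff v u =
      ∑ w ∈ {v}ᶜ, u w ^ 2 - (n - 1) * meanOff v u ^ 2 := by
    rw [dotProduct_self_eq_sum_sq, Fintype.sum_eq_add_sum_compl v, centerOff_self,
      Finset.sum_congr rfl hpoint, Finset.sum_add_distrib, Finset.sum_sub_distrib,
      ← Finset.mul_sum, sum_compl_singleton_eq_mul_meanOff hn v u, Finset.sum_const, nsmul_eq_mul,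
      card_compl_singleton]
    ring
  rw [hcenter, dotProduct_self_eq_sum_sq, Fintype.sum_eq_add_sum_compl v]
  linarith [sq_nonneg (u v)]

/-- The gradient of `u` along the edges at `v`: the forcing term in the eigenvector equation of `u`
once these edges are deleted. -/
def edgeGradient (G : SimpleGraph (Fin n)) (v : Fin n) (u : Fin n → ℝ) : Fin n → ℝ :=
  fun w => adjM G v w * (u v - u w)

lemma lap_deleteIncidenceSet_mulVec_centerOff (G : SimpleGraph (Fin n)) (u : Fin n → ℝ)
    {w : Fin n} (hw : w ≠ v) :
    (lap (G.deleteIncidenceSet v) *ᵥ centerOff v u) w =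
      (lap G *ᵥ u) w + edgeGradient G v u w := by
  have hsum (y : Fin n → ℝ) (H : SimpleGraph (Fin n)) := Fintype.sum_eq_add_sum_compl v
    fun j => adjM H w j * (y w - y j)
  rw [lap_mulVec_apply, lap_mulVec_apply, hsum, hsum u, adjM_deleteIncidenceSet,
    if_pos (Or.inr rfl), edgeGradient, adjM_comm G v w]
  have hcompl : ∑ j ∈ {v}ᶜ, adjM (G.deleteIncidenceSet v) w j *
      (centerOff v u w - centerOff v u j) = ∑ j ∈ {v}ᶜ, adjM G w j * (u w - u j) :=
    Finset.sum_congr rfl fun j hj => by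
      have hjv : j ≠ v := by simpa using hj
      rw [adjM_deleteIncidenceSet, if_neg (not_or.2 ⟨hw, hjv⟩), centerOff_of_ne hw,
        centerOff_of_ne hjv, sub_sub_sub_cancel_right]
  rw [hcompl]
  ring

lemma dotProduct_lap_deleteIncidenceSet_mulVec_centerOff {c : ℝ} (hu : lap G *ᵥ u = c • u)
    {r : Fin n → ℝ} (hr : r ∈ zeroSumOff v) :
    r ⬝ᵥ lap (G.deleteIncidenceSet v) *ᵥ centerOff v u =
      c * (r ⬝ᵥ centerOff v u) + r ⬝ᵥ edgeGradient G v u :=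
  calc _ = ∑ w, (c * (r w * centerOff v u w) + r w * edgeGradient G v u w +
        r w * (c * meanOff v u)) := Finset.sum_congr rfl fun w _ => by
        by_cases hw : w = v
        · rw [hw, hr.1]
          ring
        · rw [lap_deleteIncidenceSet_mulVec_centerOff G u hw, hu, Pi.smul_apply, smul_eq_mul,
            centerOff_of_ne hw]
          ring
    _ = _ := by
        rw [Finset.sum_add_distrib, Finset.sum_add_distrib, ← Finset.mul_sum, ← Finset.sum_mul,
          hr.2, zero_mul, add_zero]
        rfl

lemma sqrt_dotProduct_self_edgeGradient_le {D : ℝ} (hD : ∑ w, adjM G v w ≤ D) (u : Fin n → ℝ) :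
    Real.sqrt (edgeGradient G v u ⬝ᵥ edgeGradient G v u) ≤ Real.sqrt D * (2 * linf u) := by
  have hl := linf_nonneg u
  rw [← Real.sqrt_sq (show 0 ≤ 2 * linf u by positivity), ← Real.sqrt_mul' _ (sq_nonneg _),
    dotProduct_self_eq_sum_sq]
  gcongr
  calc ∑ w, edgeGradient G v u w ^ 2 ≤ ∑ w, adjM G v w * (2 * linf u) ^ 2 := by
        gcongr with w
        have hdiff : |u v - u w| ≤ 2 * linf u := by
          linarith [abs_sub (u v) (u w), abs_le_linf u v, abs_le_linf u w]
        rw [edgeGradient, mul_pow, adjM_sq]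
        exact mul_le_mul_of_nonneg_left (sq_le_sq.2 (hdiff.trans (le_abs_self _)))
          (adjM_nonneg G v w)
    _ ≤ D * (2 * linf u) ^ 2 := by
        rw [← Finset.sum_mul]
        gcongr

lemma eq_mul_add_meanOff_add_orthPart (φ : Fin n → ℝ) {w : Fin n} (hw : w ≠ v) :
    u w = (φ ⬝ᵥ centerOff v u) * φ w + meanOff v u + orthPart φ (centerOff v u) w := by
  simp only [orthPart, Pi.sub_apply, Pi.smul_apply, smul_eq_mul, centerOff_of_ne hw]
  ring

lemma abs_dotProduct_centerOff_mul_linf_le (hφv : φ v = 0) (u : Fin n → ℝ) :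
    |φ ⬝ᵥ centerOff v u| * linf φ ≤ linf u + |meanOff v u| +
      Real.sqrt (orthPart φ (centerOff v u) ⬝ᵥ orthPart φ (centerOff v u)) := by
  have : Nonempty (Fin n) := ⟨v⟩
  obtain ⟨w, hw⟩ := exists_eq_ciSup_of_finite (f := fun w => |φ w|)
  rw [linf, ← hw, ← abs_mul]
  by_cases hwv : w = v
  · rw [hwv, hφv, mul_zero, abs_zero]
    have hl := linf_nonneg u
    positivity
  · have heq := eq_mul_add_meanOff_add_orthPart (u := u) φ hwv
    have hu := abs_le_linf u w
    have hr := abs_le_sqrt_dotProduct_self (orthPart φ (centerOff v u)) w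
    rw [show φ ⬝ᵥ centerOff v u * φ w = u w - meanOff v u - orthPart φ (centerOff v u) w by
      linarith]
    linarith [abs_sub (u w - meanOff v u) (orthPart φ (centerOff v u) w),
      abs_sub (u w) (meanOff v u)]

lemma abs_dotProduct_adjM_le_sqrt_mul_sqrt {D : ℝ} (hD : ∑ w, adjM G v w ≤ D) (r : Fin n → ℝ) :
    |adjM G v ⬝ᵥ r| ≤ Real.sqrt D * Real.sqrt (r ⬝ᵥ r) := by
  refine (abs_dotProduct_le_sqrt_mul_sqrt (adjM G v) r).trans ?_
  gcongr
  simpa only [dotProduct_self_eq_sum_sq, adjM_sq] using hD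

lemma abs_dotProduct_adjM_le (hφv : φ v = 0) (hφ : |φ ⬝ᵥ centerOff v u| ≤ 1) {D a ℓ : ℝ}
    (hD : ∑ w, adjM G v w ≤ D) (ha : 0 ≤ a) (hℓ : 0 ≤ ℓ)
    (hrow : ∑ w, adjM G v w * |φ w| ≤ a + ℓ * linf φ) :
    |adjM G v ⬝ᵥ u| ≤ a + ℓ * (linf u + |meanOff v u| +
        Real.sqrt (orthPart φ (centerOff v u) ⬝ᵥ orthPart φ (centerOff v u))) +
      D * |meanOff v u| +
      Real.sqrt D * Real.sqrt (orthPart φ (centerOff v u) ⬝ᵥ orthPart φ (centerOff v u)) := by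
  have hlinf := abs_dotProduct_centerOff_mul_linf_le hφv u
  have hpoint (w : Fin n) : adjM G v w * u w = (φ ⬝ᵥ centerOff v u) * (adjM G v w * φ w) +
      meanOff v u * adjM G v w + adjM G v w * orthPart φ (centerOff v u) w := by
    by_cases hw : w = v
    · rw [hw, adjM_self]
      ring
    · rw [eq_mul_add_meanOff_add_orthPart (u := u) φ hw]
      ring
  set s := φ ⬝ᵥ centerOff v u
  set b := meanOff v u
  set r := orthPart φ (centerOff v u)
  have hsum : adjM G v ⬝ᵥ u = s * (adjM G v ⬝ᵥ φ) + b * ∑ w, adjM G v w + adjM G v ⬝ᵥ r := by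
    simp only [dotProduct, hpoint, Finset.sum_add_distrib, ← Finset.mul_sum]
  have hrow' : |adjM G v ⬝ᵥ φ| ≤ a + ℓ * linf φ :=
    (Finset.abs_sum_le_sum_abs _ _).trans (by
      simpa only [abs_mul, abs_of_nonneg (adjM_nonneg G v _)] using hrow)
  have hφpart : |s * (adjM G v ⬝ᵥ φ)| ≤ a + ℓ * (linf u + |b| + Real.sqrt (r ⬝ᵥ r)) :=
    calc _ ≤ |s| * (a + ℓ * linf φ) := by rw [abs_mul]; gcongr
      _ = |s| * a + ℓ * (|s| * linf φ) := by ring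
      _ ≤ 1 * a + ℓ * (linf u + |b| + Real.sqrt (r ⬝ᵥ r)) := by gcongr
      _ = _ := by rw [one_mul]
  have hmean : |b * ∑ w, adjM G v w| ≤ D * |b| := by
    rw [abs_mul, abs_of_nonneg (Finset.sum_nonneg fun w _ => adjM_nonneg G v w), mul_comm]
    gcongr
  rw [hsum]
  linarith [abs_add_le (s * (adjM G v ⬝ᵥ φ) + b * ∑ w, adjM G v w) (adjM G v ⬝ᵥ r),
    abs_add_le (s * (adjM G v ⬝ᵥ φ)) (b * ∑ w, adjM G v w),
    abs_dotProduct_adjM_le_sqrt_mul_sqrt hD r]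

lemma abs_dotProduct_centerOff_le_one (hn : 1 < n) (v : Fin n) (hφ : φ ⬝ᵥ φ = 1)
    (hu : u ⬝ᵥ u = 1) : |φ ⬝ᵥ centerOff v u| ≤ 1 := by
  have hle := dotProduct_self_centerOff_add_le hn v u
  have : (1 : ℝ) < n := by exact_mod_cast hn
  have hmean : 0 ≤ (n - 1) * meanOff v u ^ 2 := mul_nonneg (by linarith) (sq_nonneg _)
  refine (abs_dotProduct_le_sqrt_mul_sqrt φ _).trans ?_
  rw [hφ, Real.sqrt_one, one_mul, Real.sqrt_le_one]
  linarith

lemma gap_mul_abs_apply_le {c g : ℝ} (hu : lap G *ᵥ u = c • u) (hdeg : c + g ≤ ∑ w, adjM G v w) :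
    g * |u v| ≤ |adjM G v ⬝ᵥ u| := by
  have heq : adjM G v ⬝ᵥ u = (∑ w, adjM G v w - c) * u v := by
    have hv := congrFun hu v
    rw [lap_mulVec_apply, Pi.smul_apply, smul_eq_mul] at hv
    simp only [mul_sub, Finset.sum_sub_distrib, ← Finset.sum_mul] at hv
    rw [dotProduct]
    linarith
  rw [heq, abs_mul]
  gcongr
  exact le_trans (by linarith) (le_abs_self _)

lemma sqrt_mul_le_of_mul_le {κ d m ρ : ℝ} (hκ : 0 < κ) (hd : 0 < d) (hκd : 24 ≤ κ ^ 2 * d)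
    (hm : 0 ≤ m) (hρ : κ * d * ρ ≤ Real.sqrt (3 * d) * (2 * m)) :
    ρ ≤ m ∧ Real.sqrt (3 * d) * ρ ≤ κ * d * m / 4 := by
  have hκd0 : 0 < κ * d := by positivity
  have hsq : Real.sqrt (3 * d) ^ 2 = 3 * d := Real.sq_sqrt (by positivity)
  have hκd2 : 24 * d ≤ κ ^ 2 * d * d := by gcongr
  have hsqrt : 2 * Real.sqrt (3 * d) ≤ κ * d :=
    abs_le_of_sq_le_sq' (by linarith) hκd0.le |>.2
  refine ⟨le_of_mul_le_mul_left (hρ.trans ?_) hκd0, le_of_mul_le_mul_left ?_ hκd0⟩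
  · rw [mul_left_comm, ← mul_assoc]
    gcongr
  · calc κ * d * (Real.sqrt (3 * d) * ρ) = Real.sqrt (3 * d) * (κ * d * ρ) := by ring
      _ ≤ Real.sqrt (3 * d) * (Real.sqrt (3 * d) * (2 * m)) := by gcongr
      _ = 24 * d * m / 4 := by linear_combination 2 * m * hsq
      _ ≤ κ ^ 2 * d * d * m / 4 := by gcongr
      _ = κ * d * (κ * d * m / 4) := by ring

lemma le_div_sqrt_of_gap_mul_le (hn : 2 ≤ n) {κ d ℓ m b ρ : ℝ} (hκ : 0 < κ) (hκ1 : κ ≤ 1)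
    (hκd : 24 ≤ κ ^ 2 * d) (hℓd : 8 * ℓ ≤ κ * d) (hm : 0 ≤ m) (hb : 0 ≤ b)
    (hρ : 0 ≤ ρ) (hbn : (n - 1) * b ^ 2 ≤ 1) (hρm : κ * d * ρ ≤ Real.sqrt (3 * d) * (2 * m))
    (h : κ * d * m ≤ 2 * d / Real.sqrt n + ℓ * (m + b + ρ) + 3 * d * b + Real.sqrt (3 * d) * ρ) :
    m ≤ 17 / κ / Real.sqrt n := by
  have hn2 : (2 : ℝ) ≤ n := by exact_mod_cast hn
  have hd : 0 < d := pos_of_mul_pos_right (by linarith) (sq_nonneg κ)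
  obtain ⟨hρle, hsqrt⟩ := sqrt_mul_le_of_mul_le hκ hd hκd hm hρm
  have hsq : Real.sqrt n ^ 2 = n := Real.sq_sqrt (by linarith)
  have hpos : 0 < Real.sqrt n := Real.sqrt_pos.2 (by linarith)
  set t := Real.sqrt n
  have hbt : b * t ≤ 2 := abs_le_of_sq_le_sq' (by nlinarith [sq_nonneg b]) (by norm_num) |>.2
  have hℓterm : ℓ * (m + b + ρ) ≤ κ * d / 8 * (m + b + m) := by gcongr; linarith
  have hκd' : κ * d ≤ d := mul_le_of_le_one_left hd.le hκ1
  have hm' : κ * d * m / 2 ≤ 2 * d / t + (d / 8 + 3 * d) * b := by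
    have : κ * d / 8 * b ≤ d / 8 * b := by gcongr
    linarith
  rw [div_div, le_div_iff₀ (by positivity)]
  refine le_of_mul_le_mul_left ?_ hd
  calc d * (m * (κ * t)) = 2 * (κ * d * m / 2 * t) := by ring
    _ ≤ 2 * ((2 * d / t + (d / 8 + 3 * d) * b) * t) := by gcongr
    _ = 4 * d + 25 / 4 * d * (b * t) := by field_simp; ring
    _ ≤ 4 * d + 25 / 4 * d * 2 := by gcongr
    _ ≤ d * 17 := by linarith

lemma linf_le_of_spectral_gap (hn : 2 ≤ n) {σ : Fin n → ℝ} {φ : Fin n → Fin n → ℝ}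
    {κ d γ ℓ c : ℝ} (hκ : 0 < κ) (hκ1 : κ ≤ 1) (hκd : 24 ≤ κ ^ 2 * d) (hℓ : 0 ≤ ℓ)
    (hℓd : 8 * ℓ ≤ κ * d)
    (hγ : ∀ x : Fin n → ℝ, ∑ i, x i = 0 → σ ⬝ᵥ x = 0 → γ * (x ⬝ᵥ x) ≤ x ⬝ᵥ lap G *ᵥ x)
    (hgap : c + κ * d ≤ γ - 1) (hD : ∀ v, ∑ w, adjM G v w ≤ 3 * d)
    (hdeg : ∀ v, c + κ * d ≤ ∑ w, adjM G v w)
    (hφ : ∀ v, IsRayleighMin (lap (G.deleteIncidenceSet v)) (zeroSumOff v) (φ v))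
    (hrow : ∀ v, ∑ w, adjM G v w * |φ v w| ≤ 2 * d / Real.sqrt n + ℓ * linf (φ v))
    (hu : lap G *ᵥ u = c • u) (hunit : u ⬝ᵥ u = 1) : linf u ≤ 17 / κ / Real.sqrt n := by
  have : NeZero n := ⟨by lia⟩
  have hd : 0 < d := pos_of_mul_pos_right (by linarith) (sq_nonneg κ)
  obtain ⟨v, hv⟩ := exists_eq_ciSup_of_finite (f := fun w => |u w|)
  have hgapOff : ∀ x ∈ zeroSumOff v, φ v ⬝ᵥ x = 0 →
      (c + κ * d) * (x ⬝ᵥ x) ≤ x ⬝ᵥ lap (G.deleteIncidenceSet v) *ᵥ x := fun x hx hφx => by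
    refine (mul_le_mul_of_nonneg_right hgap (dotProduct_self_nonneg x)).trans
      ((hφ v).mul_dotProduct_self_le (isHermitian_lap _) (σ := σ) (fun y hy hσy => ?_) hx hφx)
    linarith [hγ y hy.2 hσy, dotProduct_lap_mulVec_le_deleteIncidenceSet G hy.1]
  have hresidual := ((hφ v).mul_sqrt_orthPart_le (isHermitian_lap _) hgapOff
    (centerOff_mem_zeroSumOff hn v u)
    fun r => dotProduct_lap_deleteIncidenceSet_mulVec_centerOff hu).trans
      (sqrt_dotProduct_self_edgeGradient_le (hD v) u)
  have hmean := dotProduct_self_centerOff_add_le hn v u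
  refine le_div_sqrt_of_gap_mul_le hn hκ hκ1 hκd hℓd (linf_nonneg u)
    (abs_nonneg (meanOff v u)) (Real.sqrt_nonneg _) ?_ hresidual ?_
  · rw [sq_abs]
    linarith [dotProduct_self_nonneg (centerOff v u)]
  · calc κ * d * linf u = κ * d * |u v| := by rw [linf, ← hv]
      _ ≤ |adjM G v ⬝ᵥ u| := gap_mul_abs_apply_le hu (hdeg v)
      _ ≤ _ := abs_dotProduct_adjM_le (hφ v).mem.1
        (abs_dotProduct_centerOff_le_one hn v (hφ v).dotProduct_self hunit) (hD v) (by positivity)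
        hℓ (hrow v)

end LeaveOneOut

section Delocalization

variable {p pbar q d τ : ℝ} {P : Fin n → Fin n → ℝ} {μ : PMF (SimpleGraph (Fin n))}
  {φ : SimpleGraph (Fin n) → Fin n → Fin n → ℝ} {G : SimpleGraph (Fin n)}

lemma NSSBMprob.isEdgeProb (hP : NSSBMprob n p pbar q P) (hq : 0 ≤ q) (hqp : q ≤ p)
    (hqpbar : q ≤ pbar) (hpbar : pbar ≤ 1) : IsEdgeProb P where
  symm := hP.1
  mem_Icc i j hij := by
    by_cases hs : sameSide n i j
    · obtain ⟨hlow, hup⟩ := hP.2.1 i j hij hs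
      constructor <;> linarith
    · rw [hP.2.2 i j hs]
      constructor <;> linarith

lemma NSSBMprob.offP_le (hP : NSSBMprob n p pbar q P) (hq : 0 ≤ q) (hqpbar : q ≤ pbar)
    (i j : Fin n) : offP P i j ≤ pbar := by
  rw [offP, of_apply]
  split_ifs with hij
  · exact hq.trans hqpbar
  by_cases hs : sameSide n i j
  · exact (hP.2.1 i j hij hs).2
  · rwa [hP.2.2 i j hs]

/-- The high-probability behaviour of a graph sampled with edge probabilities `P` of order `d / n`:
degrees, cut and adjacency form deviate from their expectations, in the direction that matters, by
at most a fraction `τ` of `d`, and no row of the adjacency matrix correlates with its leave-one-out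
vector `φ G' v`, where `G'` is the graph without the edges at `v`. -/
structure IsTypical (P : Fin n → Fin n → ℝ) (φ : SimpleGraph (Fin n) → Fin n → Fin n → ℝ)
    (d τ : ℝ) (G : SimpleGraph (Fin n)) : Prop where
  degree_le : ∀ v, ∑ w, adjM G v w ≤ 3 * d
  le_degree : ∀ v, ∑ w, offP P v w - τ * d ≤ ∑ w, adjM G v w
  cut_le : ∑ i, ∑ j, (if ¬ sameSide n i j then adjM G i j else 0) ≤
    ∑ i, ∑ j, (if ¬ sameSide n i j then offP P i j else 0) + τ * d * n
  dotProduct_le : ∀ x : Fin n → ℝ,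
    x ⬝ᵥ adjM G *ᵥ x ≤ x ⬝ᵥ offP P *ᵥ x + τ * d * (x ⬝ᵥ x)
  row_le : ∀ v, ∑ w, adjM G v w * |φ (G.deleteIncidenceSet v) v w| ≤
    2 * d / Real.sqrt n + 2 * Real.log n * linf (φ (G.deleteIncidenceSet v) v)

lemma exists_forall_measureReal_not_isTypical_le (hτ0 : 0 < τ) (hτ1 : τ ≤ 1) :
    ∃ D : ℝ, ∀ (n : ℕ) [NeZero n] (P : Fin n → Fin n → ℝ) (μ : PMF (SimpleGraph (Fin n))) (d : ℝ)
      (φ : SimpleGraph (Fin n) → Fin n → Fin n → ℝ), IsEdgeProduct P μ → IsEdgeProb P →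
      (∀ i j, offP P i j ≤ d / n) → D ≤ d → 8 * Real.log n ≤ τ ^ 2 * d →
      (∀ H v, φ H v ⬝ᵥ φ H v ≤ 1) → μ.toMeasure.real {G | ¬ IsTypical P φ d τ G} ≤ 7 / n := by
  obtain ⟨D, hD⟩ := exists_forall_measureReal_not_dotProduct_adjM_le hτ0 hτ1
  refine ⟨D, fun n _ P μ d φ hμ hP hd hDd hlog hφ => ?_⟩
  have hn : (1 : ℝ) ≤ n := by exact_mod_cast NeZero.one_le
  have hlog0 := Real.log_nonneg hn
  have hτd : τ ^ 2 * d ≤ d :=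
    mul_le_of_le_one_left (nonneg_of_offP_le hd) (pow_le_one₀ hτ0.le hτ1)
  have hlogn : Real.log n ≤ τ ^ 2 * d * n / 8 := by
    have := mul_le_mul hlog hn zero_le_one (hlog.trans' (by positivity))
    linarith
  have hup := (hμ.measureReal_degree_gt_le hP hd).trans
    (natCast_mul_exp_neg_le_one_div (by linarith))
  have hlow := (hμ.measureReal_degree_lt_le hP hd ⟨hτ0, hτ1⟩).trans
    (natCast_mul_exp_neg_le_one_div (by linarith))
  have hcut := (hμ.measureReal_cut_gt_le hP hd ⟨hτ0, hτ1⟩ (s := fun i j => ¬ sameSide n i j)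
    fun i j => not_congr iff_comm).trans
      (Real.exp_le_exp.2 (neg_le_neg hlogn))
  rw [Real.exp_neg, Real.exp_log (by linarith), inv_eq_one_div] at hcut
  have hspec := hD n P μ d hμ hP hd hDd (by linarith)
  have hrow := (hμ.measureReal_row_gt_le hP hd hφ (2 * Real.log n)).trans
    (natCast_mul_exp_neg_le_one_div le_rfl)
  have hsum : (7 : ℝ) / n = 1 / n + (1 / n + (1 / n + (3 / n + 1 / n))) := by ring
  rw [hsum]
  refine le_trans (measureReal_mono fun G hG => ?_)
    (measureReal_union_le _ _ |>.trans (add_le_add hup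
    (measureReal_union_le _ _ |>.trans (add_le_add hlow
    (measureReal_union_le _ _ |>.trans (add_le_add hcut
    (measureReal_union_le _ _ |>.trans (add_le_add hspec hrow))))))))
  by_contra htypical
  simp only [Set.mem_union, Set.mem_ofPred_eq, not_or, not_not] at htypical
  obtain ⟨hdeg, hlow, hcut, hspec, hrow⟩ := htypical
  exact hG ⟨hdeg, hlow, by convert hcut, hspec hdeg, hrow⟩

lemma IsTypical.linf_le (hG : IsTypical P φ d τ G) (hP : NSSBMprob n p pbar q P) (hn : Even n)
    [NeZero n] (hφ : ∀ H v, IsRayleighMin (lap H) (zeroSumOff v) (φ H v)) (hq : 0 ≤ q) (hp : p ≤ 1)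
    (hτ0 : 0 < τ) (hτ1 : 8 * τ ≤ 1) (hτd : 32 * τ * d = n * (p - q)) (hd : 24 ≤ (8 * τ) ^ 2 * d)
    (hlog : 2 * Real.log n ≤ τ * d) {u : Fin n → ℝ}
    (hu : IsUnitEigenvector (lap G) (eig (lap G) 1) u) :
    linf u ≤ 17 / (8 * τ) / Real.sqrt n := by
  have hd0 : 0 < d := pos_of_mul_pos_right (by linarith) (sq_nonneg (8 * τ))
  have hn2 : 2 ≤ n := Nat.le_of_dvd (NeZero.pos n) hn.two_dvd
  have hlarge : 24 ≤ 8 * τ * d := hd.trans (by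
    gcongr
    exact pow_le_of_le_one (by positivity) hτ1 two_ne_zero)
  have heig := hP.eig_lap_one_le hn hq (by positivity) hG.cut_le
  refine linf_le_of_spectral_gap hn2 (by positivity) hτ1 hd (ℓ := 2 * Real.log n) (by positivity)
    (by linarith) (fun x hx hσx => hP.le_dotProduct_lap_mulVec hn hG.le_degree hG.dotProduct_le
      hx hσx) (by linarith) hG.degree_le (fun v => ?_) (fun v => hφ _ v) hG.row_le hu.1
    ((dotProduct_self_eq_sum_sq u).trans hu.2)
  linarith [hG.le_degree v, hP.le_sum_offP hn v]

lemma exists_forall_measureReal_not_linf_le (hτ0 : 0 < τ) (hτ1 : 8 * τ ≤ 1) :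
    ∃ D : ℝ, ∀ n : ℕ, 2 < n → Even n → ∀ (p pbar q : ℝ) (P : Fin n → Fin n → ℝ)
      (μ : PMF (SimpleGraph (Fin n))), 0 ≤ q → q ≤ p → p ≤ pbar → pbar ≤ 1 →
      NSSBMprob n p pbar q P → IsEdgeProduct P μ → 32 * τ * (n * pbar) = n * (p - q) →
      D ≤ Real.log n → 900 * Real.log n ≤ τ ^ 2 * (n * pbar) →
      μ.toMeasure.real {G | ¬ ∀ u : Fin n → ℝ, IsUnitEigenvector (lap G) (eig (lap G) 1) u →
        linf u ≤ 17 / (8 * τ) / Real.sqrt n} ≤ 7 / n := by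
  obtain ⟨D, hD⟩ := exists_forall_measureReal_not_isTypical_le hτ0 (by linarith)
  refine ⟨max D 1, fun n hn heven p pbar q P μ hq hqp hpp hpbar hP hμ hτd hDn hlog => ?_⟩
  have : NeZero n := ⟨by lia⟩
  obtain ⟨hDlog, hlog1⟩ := max_le_iff.1 hDn
  have hqpbar := hqp.trans hpp
  have hpbar0 := hq.trans hqpbar
  have hτd1 : τ * (n * pbar) ≤ n * pbar := mul_le_of_le_one_left (by positivity) (by linarith)
  have hτd2 : τ ^ 2 * (n * pbar) ≤ τ * (n * pbar) := by
    gcongr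
    exact pow_le_of_le_one hτ0.le (by linarith) two_ne_zero
  choose φ hφ using fun (H : SimpleGraph (Fin n)) v =>
    exists_isRayleighMin (lap H) (zeroSumOff_ne_bot hn v)
  have hoffP (i j : Fin n) : offP P i j ≤ n * pbar / n := by
    rw [mul_div_cancel_left₀ _ (NeZero.ne (n : ℝ))]
    exact hP.offP_le hq hqpbar i j
  refine le_trans (measureReal_mono fun G => mt fun hG u hu => ?_)
    (hD n P μ (n * pbar) φ hμ (hP.isEdgeProb hq hqp hqpbar hpbar) hoffP (by linarith)
      (by linarith) fun H v => (hφ H v).dotProduct_self.le)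
  exact IsTypical.linf_le hG hP heven hφ hq (hpp.trans hpbar) hτ0 hτ1 hτd (by linarith)
    (by linarith) hu

lemma mul_le_sq_mul_of_mul_sqrt_add_le {L : ℝ} (hd : 0 < d) (hL : 0 ≤ L)
    (h : 1000 * (Real.sqrt (d * L) + L) ≤ 32 * τ * d) : 900 * L ≤ τ ^ 2 * d := by
  have hsq : (1000 * Real.sqrt (d * L)) ^ 2 ≤ (32 * τ * d) ^ 2 :=
    pow_le_pow_left₀ (by positivity) (by linarith) 2
  rw [mul_pow, Real.sq_sqrt (by positivity)] at hsq
  refine le_of_mul_le_mul_left ?_ hd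
  linarith [mul_nonneg hd.le hL]

lemma one_sub_ofReal_le_of_measureReal_not_le {Ω : Type*} [MeasurableSpace Ω] {ν : Measure Ω}
    [IsProbabilityMeasure ν] {B : Ω → Prop} {δ : ℝ} (h : ν.real {ω | ¬ B ω} ≤ δ) :
    1 - ENNReal.ofReal δ ≤ ν {ω | B ω} := by
  rw [tsub_le_iff_right, ← measure_univ (μ := ν), ← Set.union_compl_self {ω | B ω}]
  refine (measure_union_le _ _).trans (add_le_add_right ?_ _)
  exact (ENNReal.le_ofReal_iff_toReal_le (measure_ne_top ν _) (measureReal_nonneg.trans h)).2 h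

end Delocalization

/-- **Lemma (ℓ∞ bound on the second eigenvector).**
In the NSSBM setting with `α = p̄/(p-q)` constant and the gap condition holding for a
sufficiently large universal constant `C₀`, for every `δ ≥ 10 n⁻²` and `n` sufficiently
large, with probability at least `1 - δ`, the unit second eigenvector `u₂` of the
unnormalized Laplacian satisfies `‖u₂‖_∞ ≤ C(α,δ)/√n` for a constant `C(α,δ)` depending
only on `α` and `δ`. -/
theorem u2_inf_norm_bound :
    ∃ C0 : ℝ, 0 < C0 ∧ ∀ α δ : ℝ, ∃ C : ℝ, 0 < C ∧ ∃ N : ℕ, ∀ n : ℕ, N ≤ n → Even n →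
      ∀ p pbar q : ℝ, 0 ≤ q → q < p → p ≤ pbar → pbar ≤ 1 →
        pbar / (p - q) = α → 10 / (n : ℝ) ^ 2 ≤ δ →
      ∀ (P : Fin n → Fin n → ℝ) (μ : PMF (SimpleGraph (Fin n))),
        NSSBMprob n p pbar q P → IsEdgeProduct P μ →
        C0 * (Real.sqrt ((n : ℝ) * pbar * Real.log n) + Real.log n) ≤ (n : ℝ) * (p - q) →
        1 - ENNReal.ofReal δ ≤ μ.toMeasure {G |
          ∀ u : Fin n → ℝ, IsUnitEigenvector (lap G) (eig (lap G) 1) u →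
            linf u ≤ C / Real.sqrt n} := by
  refine ⟨1000, by norm_num, fun α δ => ?_⟩
  obtain ⟨τ, hτ⟩ : ∃ τ, τ = 1 / (32 * max α 1) := ⟨_, rfl⟩
  have hτ0 : 0 < τ := hτ ▸ by positivity
  have hτ1 : 8 * τ ≤ 1 := by
    rw [hτ, mul_one_div, div_le_one (by positivity)]
    linarith [le_max_right α 1]
  obtain ⟨D, hD⟩ := exists_forall_measureReal_not_linf_le hτ0 hτ1
  obtain ⟨N, hN⟩ := exists_nat_ge (max (7 / δ) (Real.exp D))
  refine ⟨17 / (8 * τ), by positivity, max 3 N, fun n hNn hn p pbar q hq hqp hpp hpbar hα hδ P μ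
    hP hμ hgap => one_sub_ofReal_le_of_measureReal_not_le ?_⟩
  obtain ⟨hn3, hNn⟩ := max_le_iff.1 hNn
  obtain ⟨hδn, hDn⟩ := max_le_iff.1 (hN.trans (Nat.cast_le.2 hNn))
  have hn0 : (0 : ℝ) < n := by positivity
  have hα1 : 1 ≤ α := by rw [← hα, one_le_div] <;> linarith
  have hτd : 32 * τ * (n * pbar) = n * (p - q) := by
    have hpbar0 : 0 < pbar := by linarith
    rw [hτ, max_eq_left hα1, ← hα]
    field_simp [(sub_pos.2 hqp).ne']
  have hδ0 : 0 < δ := hδ.trans_lt' (by positivity)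
  refine (hD n hn3 hn p pbar q P μ hq hqp.le hpp hpbar hP hμ hτd
    ((Real.le_log_iff_exp_le hn0).2 hDn) ?_).trans ((div_le_comm₀ hδ0 hn0).1 hδn)
  exact mul_le_sq_mul_of_mul_sqrt_add_le (mul_pos hn0 (by linarith))
    (Real.log_natCast_nonneg n) (hgap.trans_eq hτd.symm)

end
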